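/- Let α ≥ 0 and u ∈ C_0^∞(ℝ³;ℝ³) with spherical-mean decomposition u = ū + v. Setting w(r) = (‖D_r ū‖_ω, ‖Dv‖_ω, ‖div v‖_ω)ᵀ ∈ ℝ³ for r > 0, one has ∫_{ℝ³}(Lu)·(Φu) dx ≥ (1/2)|u(0)|² + c_α ∫_0^∞ r · w(r)ᵀ B₊(α) w(r) dr. -/

import Mathlib

/-!
Write `β = α/(α+2)`, `ω = x/|x|` and `c = c_α`. Integration by parts against the singular kernel
(`integral_lineDeriv_zero`, `energy_eq`) removes the second derivatives:

  `∫ (Lu)·(Φu) = c (∫ |x|⁻¹ b1 - β ∫ |x|⁻² crossT - ∫ |x|⁻² radT)`,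

where `b1` is a quadratic form in `∇u`, `crossT = (u·ω) div u - (u·∇)u·ω`, and `radT` is the radial
derivative of `½(|u|² + 3β(u·ω)²)`. In polar coordinates (`polar`) the last term is the integral of
an exact derivative in `r`, and its boundary value at the origin gives `½|u(0)|²` (`integral_radT`).
In the cross term the undifferentiated `u` may be replaced by `v = u - ū`, because the contribution
of `ū` is the integral of a divergence (`integral_crossT`).

It remains to compare integrands on each sphere `|x| = r` (`radial_ineq`). There `∇u = M + ω ⊗ A`
with `M = ∇v` and `A = D_r ū` constant on the sphere. Expanding `b1` (`b1_decomp`), the term linear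
in `A` integrates to zero, `∫ (A·ω)² = (4π/3)|A|²`, and the mixed terms are bounded by the
Cauchy-Schwarz inequality; these give the entries of `B₊` except for the multiples of `1/√2`. The
cross term is at most `‖v‖ (‖div v‖ + ‖N‖)` with `N = (∂ₖv·ω)ₖ`, and `‖v‖` is controlled by `r‖∇v‖`
through a Poincaré inequality on the sphere. The positive term `β‖N‖²` of `b1` is kept, and together
with `‖div v‖² ≤ 3‖∇v‖²` it leaves enough room for a Poincaré constant `5/7` instead of the optimal
`1/2` (`quad_core`, `scalar_ineq`).

The Poincaré inequality (`sphere_poincare`) is proved by Maurey and Pisier's argument: the degree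
one homogeneous extension of a mean zero function on the sphere is compared at two independent
Gaussian points along the path `cos t x + sin t y`, and the Gaussian measure is invariant under the
corresponding rotations.
-/

open MeasureTheory Metric Real Filter

noncomputable section

/-- `ℝ³` as Euclidean space. -/
abbrev E3 : Type := EuclideanSpace ℝ (Fin 3)

/-- Partial derivative `∂ᵢ f` on `ℝ³`. -/
def pd (i : Fin 3) (f : E3 → ℝ) (x : E3) : ℝ :=
  fderiv ℝ f x (EuclideanSpace.single i 1)

/-- Laplacian on `ℝ³`. -/
def lap (f : E3 → ℝ) (x : E3) : ℝ := ∑ i, pd i (pd i f) x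

/-- Divergence of a vector field on `ℝ³`. -/
def divg (u : E3 → Fin 3 → ℝ) (x : E3) : ℝ := ∑ k, pd k (fun y => u y k) x

/-- The 3D Lamé operator `(Lu)ᵢ = -Δuᵢ - α ∂ᵢ (div u)`. -/
def lame (α : ℝ) (u : E3 → Fin 3 → ℝ) (x : E3) (i : Fin 3) : ℝ :=
  - lap (fun y => u y i) x - α * pd i (divg u) x

/-- The constant `c_α = (α+2)/(8π(α+1))`. -/
def cA (α : ℝ) : ℝ := (α + 2) / (8 * Real.pi * (α + 1))

/-- The fundamental matrix `Φ` of the 3D Lamé system: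
`Φ_ij(x) = c_α |x|⁻¹ (δ_ij + (α/(α+2)) xᵢxⱼ/|x|²)`. -/
def Phi (α : ℝ) (x : E3) (i j : Fin 3) : ℝ :=
  cA α * ‖x‖⁻¹ * ((if i = j then (1 : ℝ) else 0) + (α / (α + 2)) * (x i * x j) / ‖x‖ ^ 2)

/-- `u ∈ C₀^∞(U; ℝ³)`: smooth, compactly supported, with support inside `U`. -/
def IsTestOn (U : Set E3) (u : E3 → Fin 3 → ℝ) : Prop :=
  ContDiff ℝ (⊤ : ℕ∞) u ∧ HasCompactSupport u ∧ tsupport u ⊆ U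

/-- `∫_{ℝ³} (Lu)·(Φ(·-y) u) dx`. -/
def lameEnergy (α : ℝ) (u : E3 → Fin 3 → ℝ) (y : E3) : ℝ :=
  ∫ x : E3, ∑ i, ∑ j, lame α u x i * Phi α (x - y) i j * u x j

/-- The surface measure on the unit sphere `S² ⊂ ℝ³` (total mass `4π`). -/
def sphMeas : Measure (sphere (0 : E3) 1) := volume.toSphere

/-- `∫_{S²} f(rω) dσ(ω)`. -/
def sphInt (f : E3 → ℝ) (r : ℝ) : ℝ := ∫ ω : sphere (0 : E3) 1, f (r • (ω : E3)) ∂sphMeas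

/-- `(ū, v)` is the spherical-mean decomposition of `u`:
`ūᵢ(r) = (1/(4π)) ∫_{S²} uᵢ(rω) dσ(ω)` and `uᵢ(x) = ūᵢ(|x|) + vᵢ(x)`. -/
def IsSphericalMeanDecomp (u : E3 → Fin 3 → ℝ) (ub : Fin 3 → ℝ → ℝ)
    (v : E3 → Fin 3 → ℝ) : Prop :=
  (∀ i r, ub i r = (1 / (4 * Real.pi)) * sphInt (fun x => u x i) r) ∧
  (∀ x i, u x i = ub i ‖x‖ + v x i)

/-- The matrix `B₊(α)`. -/
def Bplus (α : ℝ) : Matrix (Fin 3) (Fin 3) ℝ :=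
  !![1 + (α / 3) * ((2 * α + 3) / (α + 2)), -(α / (2 * Real.sqrt 3)),
       -(α / (2 * Real.sqrt 3)) * ((3 * α + 4) / (α + 2));
     -(α / (2 * Real.sqrt 3)), 1 - (1 / Real.sqrt 2) * (α / (α + 2)),
       -(α / 2) * ((α + (Real.sqrt 2)⁻¹) / (α + 2));
     -(α / (2 * Real.sqrt 3)) * ((3 * α + 4) / (α + 2)),
       -(α / 2) * ((α + (Real.sqrt 2)⁻¹) / (α + 2)), α]

/-! ### Polar coordinates -/

instance : IsFiniteMeasure sphMeas := by unfold sphMeas; infer_instance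

lemma integral_volumeIoiPow_two (f : ℝ → ℝ) :
    ∫ y : Set.Ioi (0 : ℝ), f y ∂(Measure.volumeIoiPow 2) = ∫ r in Set.Ioi (0 : ℝ), r ^ 2 * f r := by
  simp only [Measure.volumeIoiPow, ENNReal.ofReal]
  rw [integral_withDensity_eq_integral_smul,
    integral_subtype_comap measurableSet_Ioi fun a ↦ Real.toNNReal (a ^ 2) • f a,
    setIntegral_congr_fun measurableSet_Ioi fun x hx ↦ ?_]
  · rw [NNReal.smul_def, Real.coe_toNNReal _ (pow_nonneg hx.out.le _), smul_eq_mul]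
  · exact (measurable_subtype_coe.pow_const _).real_toNNReal

lemma integrable_volumeIoiPow_two (f : ℝ → ℝ) :
    Integrable (fun y : Set.Ioi (0 : ℝ) => f y) (Measure.volumeIoiPow 2) ↔
      IntegrableOn (fun r => r ^ 2 * f r) (Set.Ioi (0 : ℝ)) := by
  rw [integrableOn_iff_comap_subtypeVal measurableSet_Ioi, Measure.volumeIoiPow,
    integrable_withDensity_iff_integrable_smul', integrable_congr]
  · refine .of_forall ?_
    rintro ⟨x, hx : 0 < x⟩
    simp (disch := positivity) [ENNReal.toReal_ofReal]
  · fun_prop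
  · simp

/-- Polar coordinates in `ℝ³`. -/
lemma polar (g : E3 → ℝ) (hg : Integrable g) :
    IntegrableOn (fun r => r ^ 2 * sphInt g r) (Set.Ioi (0 : ℝ)) ∧
      ∫ x, g x = ∫ r in Set.Ioi (0 : ℝ), r ^ 2 * sphInt g r := by
  have hdim : Module.finrank ℝ E3 - 1 = 2 := by simp
  have mp := (volume : Measure E3).measurePreserving_homeomorphUnitSphereProd
  rw [hdim] at mp
  let G : sphere (0 : E3) 1 × Set.Ioi (0 : ℝ) → ℝ := fun p => g ((p.2 : ℝ) • (p.1 : E3))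
  have hG : ∀ x : ({0}ᶜ : Set E3), G (homeomorphUnitSphereProd E3 x) = g x := by
    intro x
    have hx : ‖(x : E3)‖ ≠ 0 := norm_ne_zero_iff.2 x.2
    simp [G, smul_smul, hx]
  have e1 : Integrable G ((volume : Measure E3).toSphere.prod (Measure.volumeIoiPow 2)) := by
    rw [← mp.integrable_comp_emb (Homeomorph.measurableEmbedding _)]
    have : G ∘ (homeomorphUnitSphereProd E3) = g ∘ Subtype.val := funext hG
    rw [this, ← integrableOn_iff_comap_subtypeVal (measurableSet_singleton _).compl]
    exact hg.integrableOn
  have e2 : ∫ x, g x = ∫ p, G p ∂((volume : Measure E3).toSphere.prod (Measure.volumeIoiPow 2)) := by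
    rw [← mp.integral_comp (Homeomorph.measurableEmbedding _)]
    simp_rw [hG]
    rw [integral_subtype_comap (measurableSet_singleton _).compl fun x ↦ g x,
        restrict_compl_singleton]
  have e3 := e1.integral_prod_right
  refine ⟨(integrable_volumeIoiPow_two (fun r => sphInt g r)).1 e3, ?_⟩
  rw [e2, integral_prod_symm _ e1]
  exact integral_volumeIoiPow_two (fun r => sphInt g r)

/-! ### Gaussian integrals and second moments on the sphere -/

lemma sphMeas_real_univ : sphMeas.real Set.univ = 4 * π := by
  unfold sphMeas
  rw [Measure.toSphere_real_apply_univ, measureReal_def, EuclideanSpace.volume_ball_fin_three]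
  have : (0 : ℝ) ≤ π * 4 / 3 := by positivity
  simp [this]
  ring

lemma sphInt_const (c r : ℝ) : sphInt (fun _ => c) r = 4 * π * c := by
  simp [sphInt, sphMeas_real_univ]

lemma sphere_norm (ω : sphere (0 : E3) 1) : ‖(ω : E3)‖ = 1 := by simp

lemma sphere_sum_sq (ω : sphere (0 : E3) 1) : ∑ i, (ω : E3) i ^ 2 = 1 := by
  have := EuclideanSpace.norm_sq_eq (ω : E3)
  simp at this
  exact this.symm

lemma cont_integrable (f : sphere (0 : E3) 1 → ℝ) (hf : Continuous f) : Integrable f sphMeas :=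
  hf.integrable_of_hasCompactSupport (HasCompactSupport.of_compactSpace f)

lemma integrable_gauss (n : ℕ) :
    Integrable (fun x : E3 => ‖x‖ ^ n * exp (-‖x‖ ^ 2 / 2)) := by
  rw [integrable_fun_norm_addHaar (μ := (volume : Measure E3))
    (f := fun r => r ^ n * exp (-r ^ 2 / 2))]
  have := (integrable_rpow_mul_exp_neg_mul_sq (b := 1 / 2) (by norm_num)
    (s := ((n + 2 : ℕ) : ℝ)) (by have : (0 : ℝ) ≤ ((n + 2 : ℕ) : ℝ) := by positivity
                                 linarith)).integrableOn (s := Set.Ioi (0 : ℝ))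
  refine this.congr_fun (fun x hx => ?_) measurableSet_Ioi
  have hdim : Module.finrank ℝ E3 - 1 = 2 := by simp
  simp only [rpow_natCast, hdim, smul_eq_mul]
  rw [show -(1 / 2) * x ^ 2 = -x ^ 2 / 2 by ring]
  ring

/-- The radial Gaussian moment `∫₀^∞ rⁿ exp (-r²/2) dr`. -/
def gmom (n : ℕ) : ℝ := ∫ r in Set.Ioi (0 : ℝ), r ^ n * exp (-r ^ 2 / 2)

lemma gmom_pos (n : ℕ) (hn : 2 ≤ n) : 0 < gmom n := by
  obtain ⟨m, rfl⟩ := Nat.exists_eq_add_of_le hn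
  have h := (polar _ (integrable_gauss m)).1
  have h2 : IntegrableOn (fun r : ℝ => r ^ (2 + m) * exp (-r ^ 2 / 2)) (Set.Ioi 0) := by
    have h3 := h.const_mul (1 / (4 * π))
    refine IntegrableOn.congr_fun h3 (fun r hr => ?_) measurableSet_Ioi
    have : sphInt (fun x => ‖x‖ ^ m * exp (-‖x‖ ^ 2 / 2)) r
        = 4 * π * (r ^ m * exp (-r ^ 2 / 2)) := by
      rw [← sphInt_const _ r]
      simp [sphInt, norm_smul, abs_of_pos (show (0 : ℝ) < r from hr)]
    simp only [this]
    field_simp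
    ring
  unfold gmom
  rw [setIntegral_pos_iff_support_of_nonneg_ae _ h2]
  · have : Function.support (fun r : ℝ => r ^ (2 + m) * exp (-r ^ 2 / 2)) ∩ Set.Ioi 0
        = Set.Ioi 0 := by
      apply Set.inter_eq_right.2
      intro r hr
      have : (0 : ℝ) < r := hr
      simp [this.ne']
    rw [this]; simp
  · filter_upwards [ae_restrict_mem measurableSet_Ioi] with r hr
    have : (0 : ℝ) < r := hr
    simp only [Pi.zero_apply]; positivity

/-- Polar coordinates for a function homogeneous of degree `n` times the Gaussian. -/
lemma polar_gauss (f : E3 → ℝ) (n : ℕ) (hhom : ∀ (r : ℝ) (x : E3), 0 < r → f (r • x) = r ^ n * f x)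
    (hf : Integrable (fun x => f x * exp (-‖x‖ ^ 2 / 2))) :
    ∫ x, f x * exp (-‖x‖ ^ 2 / 2) = gmom (n + 2) * sphInt f 1 := by
  rw [(polar _ hf).2, gmom, ← integral_mul_const]
  refine setIntegral_congr_fun measurableSet_Ioi (fun r hr => ?_)
  have hr : (0 : ℝ) < r := hr
  simp only [sphInt, norm_smul, norm_of_nonneg hr.le, sphere_norm, hhom _ _ hr, mul_one, one_smul]
  rw [integral_mul_const, integral_const_mul]
  ring

lemma inner_eq_sum (a x : E3) : inner ℝ a x = ∑ i, a i * x i := by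
  simp [PiLp.inner_apply, mul_comm]

lemma integrable_inner_sq_gauss (a : E3) :
    Integrable (fun x : E3 => inner ℝ a x ^ 2 * exp (-‖x‖ ^ 2 / 2)) := by
  refine ((integrable_gauss 2).const_mul (‖a‖ ^ 2)).mono' (by fun_prop) (.of_forall fun x => ?_)
  rw [norm_of_nonneg (by positivity), ← mul_assoc, ← mul_pow, ← sq_abs (inner ℝ a x)]
  gcongr
  exact abs_real_inner_le_norm a x

lemma gauss_second_moment (a : E3) :
    ∫ x : E3, inner ℝ a x ^ 2 * exp (-‖x‖ ^ 2 / 2) = ‖a‖ ^ 2 / 3 * (4 * π * gmom 4) := by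
  set Q : E3 → ℝ := fun a => ∫ x : E3, inner ℝ a x ^ 2 * exp (-‖x‖ ^ 2 / 2) with hQ
  have hinv : ∀ a b : E3, ‖a‖ = ‖b‖ → Q a = Q b := by
    intro a b hab
    let R := Submodule.reflection (Submodule.span ℝ {a - b})ᗮ
    have hR : R a = b := Submodule.reflection_sub hab
    have := (R.measurePreserving).integral_comp (R.toHomeomorph.measurableEmbedding)
      (fun x : E3 => inner ℝ b x ^ 2 * exp (-‖x‖ ^ 2 / 2))
    simp only [hQ]
    rw [← this]
    congr 1; ext x
    rw [R.norm_map, ← hR, R.inner_map_map]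
  have hhom : ∀ i : Fin 3, Q a = ‖a‖ ^ 2 * Q (EuclideanSpace.single i 1) := by
    intro i
    rw [hinv a (‖a‖ • EuclideanSpace.single i 1) (by simp [norm_smul])]
    simp only [hQ, inner_smul_left]
    rw [← integral_const_mul]
    congr 1; ext x; simp; ring
  have hsum : ∑ i : Fin 3, Q (EuclideanSpace.single i 1) = 4 * π * gmom 4 := by
    simp only [hQ]
    rw [← integral_finsetSum _ (fun i _ => integrable_inner_sq_gauss _)]
    have : ∀ x : E3, ∑ i : Fin 3, inner ℝ (EuclideanSpace.single i (1 : ℝ)) x ^ 2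
        * exp (-‖x‖ ^ 2 / 2) = ‖x‖ ^ 2 * exp (-‖x‖ ^ 2 / 2) := by
      intro x
      rw [← Finset.sum_mul]
      congr 1
      rw [EuclideanSpace.norm_sq_eq]
      simp [EuclideanSpace.inner_single_left]
    simp_rw [this]
    rw [polar_gauss (fun x => ‖x‖ ^ 2) 2 (by
      intro r x hr; simp [norm_smul, mul_pow]) (integrable_gauss 2)]
    have : sphInt (fun x => ‖x‖ ^ 2) 1 = 4 * π := by
      have := sphInt_const 1 1
      simpa [sphInt] using this
    rw [this]; ring
  have h0 := hhom 0
  have h1 := hhom 1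
  have h2 := hhom 2
  rw [Fin.sum_univ_three] at hsum
  change Q a = _
  rw [← hsum]
  linarith

lemma sph_second_moment (a : E3) :
    sphInt (fun x => inner ℝ a x ^ 2) 1 = 4 * π / 3 * ‖a‖ ^ 2 := by
  have h1 := gauss_second_moment a
  rw [polar_gauss (fun x => inner ℝ a x ^ 2) 2 (by
    intro r x hr; simp [inner_smul_right, mul_pow]) (integrable_inner_sq_gauss a)] at h1
  have := gmom_pos 4 (by norm_num)
  have h2 : gmom 4 * (sphInt (fun x => inner ℝ a x ^ 2) 1 - 4 * π / 3 * ‖a‖ ^ 2) = 0 := by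
    rw [mul_sub, h1]; ring
  have := (mul_eq_zero.1 h2).resolve_left this.ne'
  linarith

lemma sph_second_moment' (a : Fin 3 → ℝ) :
    ∫ ω : sphere (0 : E3) 1, (∑ i, a i * (ω : E3) i) ^ 2 ∂sphMeas = 4 * π / 3 * ∑ i, a i ^ 2 := by
  have := sph_second_moment (WithLp.toLp 2 a)
  simp only [sphInt, inner_eq_sum, one_smul, EuclideanSpace.norm_sq_eq] at this
  simpa using this

/-! ### Rotations of the Gaussian on `ℝ³ × ℝ³` -/

/-- The Cauchy-Schwarz inequality for integrals of real functions. -/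
lemma integral_cs {X : Type*} [MeasurableSpace X] (μ : Measure X) (f g : X → ℝ)
    (hf : Integrable (fun x => f x ^ 2) μ) (hg : Integrable (fun x => g x ^ 2) μ)
    (hfg : Integrable (fun x => f x * g x) μ) :
    (∫ x, f x * g x ∂μ) ^ 2 ≤ (∫ x, f x ^ 2 ∂μ) * ∫ x, g x ^ 2 ∂μ := by
  have key : ∀ l : ℝ, 0 ≤ (∫ x, f x ^ 2 ∂μ) * (l * l) + (2 * ∫ x, f x * g x ∂μ) * l
      + ∫ x, g x ^ 2 ∂μ := by
    intro l
    have h : 0 ≤ ∫ x, (l * f x + g x) ^ 2 ∂μ := integral_nonneg fun x => sq_nonneg _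
    have e : ∀ x, (l * f x + g x) ^ 2 = (l * l) * f x ^ 2 + (2 * l) * (f x * g x) + g x ^ 2 := by
      intro x; ring
    simp_rw [e] at h
    have hi : Integrable (fun x => l * l * f x ^ 2 + 2 * l * (f x * g x)) μ :=
      (hf.const_mul _).add (hfg.const_mul _)
    rw [integral_add hi hg,
      integral_add (hf.const_mul _) (hfg.const_mul _), integral_const_mul, integral_const_mul] at h
    linarith
  have := discrim_le_zero key
  unfold discrim at this
  linarith

/-- The rotation `(x, y) ↦ (cos t x + sin t y, -sin t x + cos t y)` of `ℝ³ × ℝ³`. -/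
def rotn (t : ℝ) (p : E3 × E3) : E3 × E3 :=
  (cos t • p.1 + sin t • p.2, (-sin t) • p.1 + cos t • p.2)

lemma rotn_norm (t : ℝ) (p : E3 × E3) :
    ‖(rotn t p).1‖ ^ 2 + ‖(rotn t p).2‖ ^ 2 = ‖p.1‖ ^ 2 + ‖p.2‖ ^ 2 := by
  simp only [rotn, norm_add_sq_real, norm_smul, inner_smul_left, inner_smul_right, mul_pow,
    norm_eq_abs, sq_abs]
  have := sin_sq_add_cos_sq t
  simp
  linear_combination (‖p.1‖ ^ 2 + ‖p.2‖ ^ 2) * this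

lemma rotn_measurePreserving (t : ℝ) :
    MeasurePreserving (rotn t) (volume : Measure (E3 × E3)) volume := by
  let L : WithLp 2 (E3 × E3) →ₗ[ℝ] WithLp 2 (E3 × E3) :=
    { toFun := fun p => WithLp.toLp 2 (rotn t (WithLp.ofLp p))
      map_add' := by
        intro p q
        rw [← WithLp.toLp_add]
        congr 1
        ext <;> simp [rotn] <;> ring
      map_smul' := by
        intro c p
        rw [RingHom.id_apply, ← WithLp.toLp_smul]
        congr 1
        ext <;> simp [rotn] <;> ring }
  let L' : WithLp 2 (E3 × E3) →ₗᵢ[ℝ] WithLp 2 (E3 × E3) :=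
    { L with
      norm_map' := by
        intro p
        rw [← sq_eq_sq₀ (norm_nonneg _) (norm_nonneg _), WithLp.prod_norm_sq_eq_of_L2,
          WithLp.prod_norm_sq_eq_of_L2]
        exact rotn_norm t (WithLp.ofLp p) }
  have h1 := (L'.toLinearIsometryEquiv rfl).measurePreserving
  have h2 := (WithLp.volume_preserving_ofLp E3 E3).comp
    (h1.comp (WithLp.volume_preserving_toLp E3 E3))
  exact h2

lemma ae_rotn_ne_zero : ∀ᵐ p : E3 × E3, ∀ t : ℝ, (rotn t p).1 ≠ 0 := by
  have key : ∀ᵐ p : E3 × E3, inner ℝ p.1 p.2 ^ 2 ≠ ‖p.1‖ ^ 2 * ‖p.2‖ ^ 2 := by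
    rw [Measure.volume_eq_prod]
    refine (Measure.ae_prod_iff_ae_ae ?_).2 ?_
    · exact (measurableSet_eq_fun (by fun_prop) (by fun_prop)).compl
    · have h0 : ∀ᵐ x : E3, x ≠ 0 := by
        simp [ae_iff]
      filter_upwards [h0] with x hx
      have hs : volume ((Submodule.span ℝ {x} : Submodule ℝ E3) : Set E3) = 0 := by
        apply Measure.addHaar_submodule
        intro htop
        have h1 := finrank_span_singleton (K := ℝ) hx
        rw [htop] at h1
        simp at h1
      rw [ae_iff]
      refine measure_mono_null ?_ hs
      intro y hy
      simp only [ne_eq, not_not, Set.mem_ofPred_eq] at hy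
      have hz : ‖(‖x‖ ^ 2) • y - (inner ℝ x y) • x‖ ^ 2 = 0 := by
        rw [norm_sub_sq_real]
        simp only [norm_smul, inner_smul_left, inner_smul_right, mul_pow, norm_eq_abs, sq_abs,
          norm_pow, real_inner_comm]
        simp
        linear_combination (-‖x‖ ^ 2) * hy
      have hz2 : (‖x‖ ^ 2) • y = (inner ℝ x y) • x := by
        simpa [sub_eq_zero] using hz
      have hx2 : ‖x‖ ^ 2 ≠ 0 := by simpa using hx
      apply Submodule.mem_span_singleton.2
      refine ⟨(‖x‖ ^ 2)⁻¹ * inner ℝ x y, ?_⟩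
      rw [mul_smul, ← hz2, smul_smul, inv_mul_cancel₀ hx2, one_smul]
  filter_upwards [key] with p hp t ht
  apply hp
  simp only [rotn] at ht
  have e1 : inner ℝ p.1 (cos t • p.1 + sin t • p.2) = 0 := by rw [ht, inner_zero_right]
  have e2 : inner ℝ p.2 (cos t • p.1 + sin t • p.2) = 0 := by rw [ht, inner_zero_right]
  simp only [inner_add_right, inner_smul_right, real_inner_self_eq_norm_sq,
    real_inner_comm p.1 p.2] at e1 e2
  have h := sin_sq_add_cos_sq t
  set q := inner ℝ p.1 p.2
  set c := cos t
  set s := sin t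
  have hc : c * (q ^ 2 - ‖p.1‖ ^ 2 * ‖p.2‖ ^ 2) = 0 := by
    linear_combination q * e2 - ‖p.2‖ ^ 2 * e1
  have hs : s * (q ^ 2 - ‖p.1‖ ^ 2 * ‖p.2‖ ^ 2) = 0 := by
    linear_combination q * e1 - ‖p.1‖ ^ 2 * e2
  linear_combination c * hc + s * hs - (q ^ 2 - ‖p.1‖ ^ 2 * ‖p.2‖ ^ 2) * h

lemma hasDerivAt_norm_curve {X : ℝ → E3} {X' : E3} {t : ℝ} (hX : HasDerivAt X X' t)
    (h0 : X t ≠ 0) : HasDerivAt (fun s => ‖X s‖) (inner ℝ (X t) X' / ‖X t‖) t := by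
  have h1 := hX.norm_sq
  have h2 := h1.sqrt (by simpa using h0)
  have e : (fun s => √(‖X s‖ ^ 2)) = fun s => ‖X s‖ := by ext s; simp
  rw [e] at h2
  convert! h2 using 1
  rw [sqrt_sq (norm_nonneg _)]
  field_simp

/-! ### A Poincaré inequality on the sphere -/

/-- The radial projection `x ↦ x / |x|` (with value `0` at the origin). -/
def nrm (x : E3) : E3 := ‖x‖⁻¹ • x

lemma nrm_norm_le (x : E3) : ‖nrm x‖ ≤ 1 := by
  unfold nrm
  rw [norm_smul, norm_inv, norm_norm]
  exact inv_mul_le_one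

lemma nrm_measurable : Measurable nrm := by
  unfold nrm; fun_prop

lemma nrm_continuousOn : ContinuousOn nrm {0}ᶜ := by
  unfold nrm
  refine ContinuousOn.smul (ContinuousOn.inv₀ continuous_norm.continuousOn ?_) continuousOn_id
  intro x hx; simpa using hx

lemma nrm_smul {r : ℝ} (hr : 0 < r) (x : E3) : nrm (r • x) = nrm x := by
  simp only [nrm, norm_smul, norm_of_nonneg hr.le, smul_smul]
  congr 1
  field_simp

lemma nrm_sphere (ω : sphere (0 : E3) 1) : nrm (ω : E3) = ω := by simp [nrm]

/-- At a unit vector `z`, the gradient of the degree one homogeneous extension of `g|_{S²}`. -/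
def bvec (g : E3 → ℝ) (z : E3) : E3 := g z • z + gradient g z - (inner ℝ (gradient g z) z) • z

lemma gradient_continuous {g : E3 → ℝ} (hg : ContDiff ℝ 1 g) : Continuous (gradient g) := by
  unfold gradient
  exact (InnerProductSpace.toDual ℝ E3).symm.continuous.comp (hg.continuous_fderiv one_ne_zero)

lemma bvec_continuous {g : E3 → ℝ} (hg : ContDiff ℝ 1 g) : Continuous (bvec g) := by
  have h1 := gradient_continuous hg
  have h2 := hg.continuous
  unfold bvec
  fun_prop

lemma inner_gradient (g : E3 → ℝ) (x h : E3) : inner ℝ (gradient g x) h = fderiv ℝ g x h := by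
  simp [gradient]

/-- The degree one homogeneous extension of `g|_{S²}`. -/
def hext (g : E3 → ℝ) (x : E3) : ℝ := ‖x‖ * g (nrm x)

lemma hext_hasDerivAt {g : E3 → ℝ} (hg : ContDiff ℝ 1 g) {X : ℝ → E3} {X' : E3} {t : ℝ}
    (hX : HasDerivAt X X' t) (h0 : X t ≠ 0) :
    HasDerivAt (fun s => hext g (X s)) (inner ℝ (bvec g (nrm (X t))) X') t := by
  have hn := hasDerivAt_norm_curve hX h0
  have hn0 : ‖X t‖ ≠ 0 := norm_ne_zero_iff.2 h0
  have hN : HasDerivAt (fun s => nrm (X s)) _ t := (hn.inv hn0).smul hX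
  have hgN := (hg.differentiable one_ne_zero (nrm (X t))).hasFDerivAt.comp_hasDerivAt t hN
  have := hn.mul hgN
  convert! this using 1
  have e := fun h => (inner_gradient g (nrm (X t)) h).symm
  rw [e]
  simp only [bvec, inner_sub_left, inner_add_left, inner_smul_left, inner_add_right,
    inner_smul_right, Function.comp]
  simp only [nrm, inner_smul_left, inner_smul_right, conj_trivial, Pi.inv_apply]
  field_simp
  ring

lemma bvec_norm_sq {g : E3 → ℝ} {z : E3} (hz : ‖z‖ = 1) :
    ‖bvec g z‖ ^ 2 = g z ^ 2 + (‖gradient g z‖ ^ 2 - inner ℝ (gradient g z) z ^ 2) := by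
  rw [← real_inner_self_eq_norm_sq]
  simp only [bvec, inner_sub_left, inner_add_left, inner_smul_left, inner_add_right, inner_sub_right,
    inner_smul_right, conj_trivial, real_inner_self_eq_norm_sq, hz,
    real_inner_comm (gradient g z) z]
  ring

/-- The density of the (unnormalised) Gaussian on `ℝ³`. -/
def gd (x : E3) : ℝ := exp (-‖x‖ ^ 2 / 2)

lemma gd_pos (x : E3) : 0 < gd x := exp_pos _

lemma gd_cont : Continuous gd := by unfold gd; fun_prop

lemma gd_rotn (t : ℝ) (p : E3 × E3) : gd (rotn t p).1 * gd (rotn t p).2 = gd p.1 * gd p.2 := by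
  simp only [gd, ← exp_add]
  congr 1
  linear_combination (-1 / 2) * rotn_norm t p

lemma integrable_gd (n : ℕ) : Integrable (fun x : E3 => ‖x‖ ^ n * gd x) := integrable_gauss n

lemma integral_gd : ∫ x, gd x = 4 * π * gmom 2 := by
  have := polar_gauss (fun _ => 1) 0 (by simp) (by simpa using integrable_gauss 0)
  rw [sphInt_const] at this
  simp only [one_mul, zero_add] at this
  unfold gd; rw [this]; ring

/-- Fibrewise along the quarter circle from `x` to `y`, by the fundamental theorem of calculus and
Cauchy-Schwarz. -/
lemma hext_sub_sq_le {g : E3 → ℝ} (hg : ContDiff ℝ 1 g) (p : E3 × E3)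
    (hp : ∀ t : ℝ, (rotn t p).1 ≠ 0) :
    (hext g p.2 - hext g p.1) ^ 2 ≤
      (π / 2) * ∫ t in Set.Ioc 0 (π / 2), inner ℝ (bvec g (nrm (rotn t p).1)) (rotn t p).2 ^ 2 := by
  have hd : ∀ t, HasDerivAt (fun s => (rotn s p).1) (rotn t p).2 t := by
    intro t
    simp only [rotn]
    exact ((hasDerivAt_cos t).smul_const p.1).add ((hasDerivAt_sin t).smul_const p.2)
  have hc1 : Continuous (fun t => (rotn t p).1) := by unfold rotn; fun_prop
  have hc2 : Continuous (fun t => (rotn t p).2) := by unfold rotn; fun_prop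
  have hN : Continuous (fun t => nrm (rotn t p).1) :=
    nrm_continuousOn.comp_continuous hc1 (fun t => hp t)
  set φ : ℝ → ℝ := fun t => inner ℝ (bvec g (nrm (rotn t p).1)) (rotn t p).2 with hφ
  have hφc : Continuous φ := ((bvec_continuous hg).comp hN).inner hc2
  have hftc := intervalIntegral.integral_eq_sub_of_hasDerivAt (a := 0) (b := π / 2)
    (fun t _ => hext_hasDerivAt hg (hd t) (hp t)) (hφc.intervalIntegrable _ _)
  have hr1 : (rotn (π / 2) p).1 = p.2 := by simp [rotn]
  have hr0 : (rotn 0 p).1 = p.1 := by simp [rotn]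
  rw [hr1, hr0] at hftc
  rw [← hftc]
  have hpi : (0 : ℝ) ≤ π / 2 := by positivity
  rw [intervalIntegral.integral_of_le hpi]
  have hI : ∀ f : ℝ → ℝ, Continuous f → Integrable f (volume.restrict (Set.Ioc 0 (π / 2))) :=
    fun f hf => (hf.integrableOn_Icc (a := 0) (b := π / 2)).mono_set Set.Ioc_subset_Icc_self
  have := integral_cs (volume.restrict (Set.Ioc 0 (π / 2))) (fun _ => 1) φ
    (hI _ (by fun_prop)) (hI _ (by fun_prop)) (hI _ (by fun_prop))
  simpa [measureReal_def, hpi] using this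

lemma bvec_bdd {g : E3 → ℝ} (hg : ContDiff ℝ 1 g) : ∃ C, 0 ≤ C ∧ ∀ x, ‖bvec g (nrm x)‖ ≤ C := by
  obtain ⟨C, hC⟩ := (isCompact_closedBall (0 : E3) 1).exists_bound_of_continuousOn
    (bvec_continuous hg).continuousOn
  exact ⟨max C 0, le_max_right _ _, fun x => (hC _ (by simpa using nrm_norm_le x)).trans
    (le_max_left _ _)⟩

lemma hext_bdd {g : E3 → ℝ} (hg : ContDiff ℝ 1 g) : ∃ C, 0 ≤ C ∧ ∀ x, |hext g x| ≤ C * ‖x‖ := by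
  obtain ⟨C, hC⟩ := (isCompact_closedBall (0 : E3) 1).exists_bound_of_continuousOn
    hg.continuous.continuousOn
  refine ⟨max C 0, le_max_right _ _, fun x => ?_⟩
  rw [hext, abs_mul, abs_norm, mul_comm]
  gcongr
  exact (hC _ (by simpa using nrm_norm_le x)).trans (le_max_left _ _)

/-- `hext_sub_sq_le` integrated against the Gaussian measure on `ℝ³ × ℝ³`, which is invariant under
`rotn t`: all the rotated integrals on the right agree with the one at `t = 0`, and the Gaussian
moments common to both sides cancel. -/
lemma gauss_poincare {g : E3 → ℝ} (hg : ContDiff ℝ 1 g) (h0 : sphInt g 1 = 0) :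
    2 * sphInt (fun x => g x ^ 2) 1 ≤ (π ^ 2 / 12) * sphInt (fun x => ‖bvec g x‖ ^ 2) 1 := by
  obtain ⟨C, hC0, hC⟩ := bvec_bdd hg
  obtain ⟨K, hK0, hK⟩ := hext_bdd hg
  have hm : Measurable (hext g) := by
    unfold hext
    exact measurable_norm.mul (hg.continuous.measurable.comp nrm_measurable)
  have hbm : Measurable (fun x => bvec g (nrm x)) :=
    (bvec_continuous hg).measurable.comp nrm_measurable
  have hgdm := gd_cont.measurable
  have i1 : Integrable (fun x => hext g x * gd x) := by
    refine ((integrable_gd 1).const_mul K).mono' (by fun_prop) (.of_forall fun x => ?_)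
    rw [norm_mul, norm_of_nonneg (gd_pos x).le, ← mul_assoc, pow_one]
    exact mul_le_mul_of_nonneg_right (hK x) (gd_pos x).le
  have i2 : Integrable (fun x => hext g x ^ 2 * gd x) := by
    refine ((integrable_gd 2).const_mul (K ^ 2)).mono' (by fun_prop) (.of_forall fun x => ?_)
    rw [norm_mul, norm_of_nonneg (gd_pos x).le, ← mul_assoc, ← mul_pow, norm_pow]
    exact mul_le_mul_of_nonneg_right (pow_le_pow_left₀ (norm_nonneg _) (hK x) 2) (gd_pos x).le
  have i0 : Integrable gd := by simpa using integrable_gd 0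
  have i3 : Integrable (fun x => ‖bvec g (nrm x)‖ ^ 2 * gd x) := by
    refine (i0.const_mul (C ^ 2)).mono' (by fun_prop) (.of_forall fun x => ?_)
    rw [norm_mul, norm_of_nonneg (gd_pos x).le, norm_of_nonneg (by positivity)]
    exact mul_le_mul_of_nonneg_right (pow_le_pow_left₀ (norm_nonneg _) (hC x) 2) (gd_pos x).le
  have e1 : ∫ x, hext g x * gd x = 0 := by
    unfold gd
    rw [polar_gauss (hext g) 1 (by
      intro r x hr; simp [hext, nrm_smul hr, norm_smul, abs_of_pos hr, mul_assoc]) i1]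
    have : sphInt (hext g) 1 = sphInt g 1 := by
      simp [sphInt, hext, nrm_sphere]
    rw [this, h0, mul_zero]
  have e2 : ∫ x, hext g x ^ 2 * gd x = gmom 4 * sphInt (fun x => g x ^ 2) 1 := by
    unfold gd
    rw [polar_gauss (fun x => hext g x ^ 2) 2 (by
      intro r x hr; simp [hext, nrm_smul hr, norm_smul, mul_pow, mul_assoc]) i2]
    simp [sphInt, hext, nrm_sphere]
  have e3 : ∫ x, ‖bvec g (nrm x)‖ ^ 2 * gd x
      = gmom 2 * sphInt (fun x => ‖bvec g x‖ ^ 2) 1 := by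
    unfold gd
    rw [polar_gauss (fun x => ‖bvec g (nrm x)‖ ^ 2) 0 (by
      intro r x hr; simp [nrm_smul hr]) i3]
    simp [sphInt, nrm_sphere]
  -- `hext g` has mean zero, so independence of the two Gaussian variables removes the mixed term
  have eL : ∫ p : E3 × E3, (hext g p.2 - hext g p.1) ^ 2 * (gd p.1 * gd p.2)
      = 2 * (gmom 4 * sphInt (fun x => g x ^ 2) 1) * (4 * π * gmom 2) := by
    have hsplit : ∀ p : E3 × E3, (hext g p.2 - hext g p.1) ^ 2 * (gd p.1 * gd p.2)
        = gd p.1 * (hext g p.2 ^ 2 * gd p.2) + (hext g p.1 ^ 2 * gd p.1) * gd p.2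
          - 2 * ((hext g p.1 * gd p.1) * (hext g p.2 * gd p.2)) := by intro p; ring
    simp_rw [hsplit]
    have j1 : Integrable (fun p : E3 × E3 => gd p.1 * (hext g p.2 ^ 2 * gd p.2)) := i0.mul_prod i2
    have j2 : Integrable (fun p : E3 × E3 => (hext g p.1 ^ 2 * gd p.1) * gd p.2) := i2.mul_prod i0
    have j3 : Integrable (fun p : E3 × E3 => (hext g p.1 * gd p.1) * (hext g p.2 * gd p.2)) :=
      i1.mul_prod i1
    have j4 : Integrable (fun p : E3 × E3 => gd p.1 * (hext g p.2 ^ 2 * gd p.2)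
      + (hext g p.1 ^ 2 * gd p.1) * gd p.2) := j1.add j2
    rw [integral_sub j4 (j3.const_mul 2), integral_add j1 j2, integral_const_mul,
      Measure.volume_eq_prod, integral_prod_mul gd (fun x => hext g x ^ 2 * gd x),
      integral_prod_mul (fun x => hext g x ^ 2 * gd x) gd,
      integral_prod_mul (fun x => hext g x * gd x) (fun x => hext g x * gd x), e1, e2, integral_gd]
    ring
  -- conditionally on `p.1`, the variable `p.2` is Gaussian, so `H` integrates to second moments
  let H : E3 × E3 → ℝ := fun p => inner ℝ (bvec g (nrm p.1)) p.2 ^ 2 * (gd p.1 * gd p.2)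
  have hHm : Measurable H := by
    have h1 : Measurable (fun p : E3 × E3 => bvec g (nrm p.1)) := hbm.comp measurable_fst
    have h2 : Measurable (fun p : E3 × E3 => inner ℝ (bvec g (nrm p.1)) p.2) :=
      h1.inner measurable_snd
    exact (h2.pow_const 2).mul ((hgdm.comp measurable_fst).mul (hgdm.comp measurable_snd))
  have hHb : ∀ p, ‖H p‖ ≤ C ^ 2 * (‖p.1‖ ^ 2 + ‖p.2‖ ^ 2) * (gd p.1 * gd p.2) := by
    intro p
    have hpos := mul_pos (gd_pos p.1) (gd_pos p.2)
    simp only [H]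
    rw [norm_mul, norm_of_nonneg hpos.le, norm_of_nonneg (sq_nonneg _)]
    refine mul_le_mul_of_nonneg_right ?_ hpos.le
    have h1 : |inner ℝ (bvec g (nrm p.1)) p.2| ≤ C * ‖p.2‖ :=
      (abs_real_inner_le_norm _ _).trans (mul_le_mul_of_nonneg_right (hC _) (norm_nonneg _))
    rw [← sq_abs]
    calc _ ≤ (C * ‖p.2‖) ^ 2 := pow_le_pow_left₀ (abs_nonneg _) h1 2
      _ ≤ _ := by rw [mul_pow]; gcongr; nlinarith [sq_nonneg ‖p.1‖]
  have hBint : Integrable (fun p : E3 × E3 =>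
      C ^ 2 * (‖p.1‖ ^ 2 + ‖p.2‖ ^ 2) * (gd p.1 * gd p.2)) := by
    have k1 : Integrable (fun p : E3 × E3 => (‖p.1‖ ^ 2 * gd p.1) * gd p.2) :=
      (integrable_gd 2).mul_prod i0
    have k2 : Integrable (fun p : E3 × E3 => gd p.1 * (‖p.2‖ ^ 2 * gd p.2)) :=
      i0.mul_prod (integrable_gd 2)
    refine ((k1.add k2).const_mul (C ^ 2)).congr (.of_forall fun p => ?_)
    simp only [Pi.add_apply]; ring
  have hHint : Integrable H := hBint.mono' hHm.aestronglyMeasurable (.of_forall hHb)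
  have eH : ∫ p, H p = (4 * π * gmom 4 / 3) * (gmom 2 * sphInt (fun x => ‖bvec g x‖ ^ 2) 1) := by
    rw [Measure.volume_eq_prod, integral_prod _ (by rwa [← Measure.volume_eq_prod]), ← e3,
      ← integral_const_mul]
    congr 1; ext x
    have : ∀ y, H (x, y) = gd x * (inner ℝ (bvec g (nrm x)) y ^ 2 * exp (-‖y‖ ^ 2 / 2)) := by
      intro y; simp only [H, gd]; ring
    simp_rw [this]
    rw [integral_const_mul, gauss_second_moment]
    ring
  have hrot : ∀ t, ∫ p, H (rotn t p) = ∫ p, H p := by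
    intro t
    have h1 := rotn_measurePreserving t
    have := integral_map (μ := volume) h1.measurable.aemeasurable (f := H) hHm.aestronglyMeasurable
    rw [h1.map_eq] at this
    exact this.symm
  have hprod : Integrable (fun q : (E3 × E3) × ℝ => H (rotn q.2 q.1))
      (volume.prod (volume.restrict (Set.Ioc 0 (π / 2)))) := by
    have hb := hBint.comp_fst (volume.restrict (Set.Ioc 0 (π / 2)))
    refine hb.mono' (Measurable.aestronglyMeasurable ?_) (.of_forall fun q => ?_)
    · apply hHm.comp
      unfold rotn
      fun_prop
    · refine (hHb _).trans (le_of_eq ?_)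
      rw [rotn_norm, gd_rotn]
  have hle : ∫ p : E3 × E3, (hext g p.2 - hext g p.1) ^ 2 * (gd p.1 * gd p.2) ≤
      ∫ p : E3 × E3, (π / 2) * ∫ t in Set.Ioc 0 (π / 2), H (rotn t p) := by
    refine integral_mono_of_nonneg (.of_forall fun p => ?_) (hprod.integral_prod_left.const_mul _) ?_
    · have := mul_pos (gd_pos p.1) (gd_pos p.2)
      simp only [Pi.zero_apply]; positivity
    · filter_upwards [ae_rotn_ne_zero] with p hp
      have h1 := mul_le_mul_of_nonneg_right (hext_sub_sq_le hg p hp)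
        (mul_pos (gd_pos p.1) (gd_pos p.2)).le
      refine h1.trans (le_of_eq ?_)
      rw [mul_assoc, ← integral_mul_const]
      congr 1
      refine integral_congr_ae (.of_forall fun t => ?_)
      simp only [H, gd_rotn]
  have hR : ∫ p : E3 × E3, (π / 2) * ∫ t in Set.Ioc 0 (π / 2), H (rotn t p)
      = (π / 2) * ((π / 2) * ∫ p, H p) := by
    rw [integral_const_mul, integral_integral_swap (f := fun p t => H (rotn t p)) hprod]
    simp_rw [hrot]
    have hpi : (0 : ℝ) ≤ π / 2 := by positivity
    simp [measureReal_def, hpi]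
  rw [hR, eL, eH] at hle
  have m2 := gmom_pos 2 le_rfl
  have m4 := gmom_pos 4 (by norm_num)
  have hpos : 0 < 4 * π * gmom 4 * gmom 2 := by positivity
  refine le_of_mul_le_mul_left ?_ hpos
  linarith

/-- A Poincaré inequality on the sphere. The optimal constant is `1/2`; the value `5/7` comes from
`π² ≤ 10` in `gauss_poincare`, and suffices for `quad_core`. -/
lemma sphere_poincare {g : E3 → ℝ} (hg : ContDiff ℝ 1 g) (h0 : sphInt g 1 = 0) :
    sphInt (fun x => g x ^ 2) 1 ≤ (5 / 7) *
      sphInt (fun x => ‖gradient g x‖ ^ 2 - inner ℝ (gradient g x) x ^ 2) 1 := by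
  have h := gauss_poincare hg h0
  have h1 := gradient_continuous hg
  have h2 := hg.continuous
  have e : sphInt (fun x => ‖bvec g x‖ ^ 2) 1 = sphInt (fun x => g x ^ 2) 1 +
      sphInt (fun x => ‖gradient g x‖ ^ 2 - inner ℝ (gradient g x) x ^ 2) 1 := by
    unfold sphInt
    rw [← integral_add]
    · congr 1; ext ω
      simp only [one_smul]
      rw [bvec_norm_sq (sphere_norm ω)]
    · exact cont_integrable _ (by fun_prop)
    · exact cont_integrable _ (by fun_prop)
  have hF : 0 ≤ sphInt (fun x => g x ^ 2) 1 := integral_nonneg fun _ => sq_nonneg _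
  have hB : 0 ≤ sphInt (fun x => ‖bvec g x‖ ^ 2) 1 := integral_nonneg fun _ => sq_nonneg _
  have hpi : π ^ 2 ≤ 10 := by nlinarith [pi_lt_d2, pi_pos]
  have : (π ^ 2 / 12) * sphInt (fun x => ‖bvec g x‖ ^ 2) 1 ≤
      (10 / 12) * sphInt (fun x => ‖bvec g x‖ ^ 2) 1 := by gcongr
  rw [e] at h this
  linarith

/-! ### Functions with a power singularity at the origin -/

/-- Functions continuous off the origin and `O(|x|ⁿ)` uniformly on `ℝ³ ∖ {0}`. -/
structure Sg (n : ℤ) (g : E3 → ℝ) : Prop where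
  cont : ContinuousOn g {0}ᶜ
  bd : ∃ C, 0 ≤ C ∧ ∀ x, x ≠ 0 → |g x| ≤ C * ‖x‖ ^ n

namespace Sg

variable {m n : ℤ} {f g : E3 → ℝ}

lemma mul (hf : Sg m f) (hg : Sg n g) : Sg (m + n) (fun x => f x * g x) := by
  obtain ⟨C, hC, h1⟩ := hf.bd
  obtain ⟨D, hD, h2⟩ := hg.bd
  refine ⟨hf.cont.mul hg.cont, C * D, mul_nonneg hC hD, fun x hx => ?_⟩
  have hn : ‖x‖ ≠ 0 := norm_ne_zero_iff.2 hx
  rw [abs_mul, zpow_add₀ hn]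
  calc _ ≤ (C * ‖x‖ ^ m) * (D * ‖x‖ ^ n) :=
        mul_le_mul (h1 x hx) (h2 x hx) (abs_nonneg _) (by positivity)
    _ = _ := by ring

lemma add (hf : Sg n f) (hg : Sg n g) : Sg n (fun x => f x + g x) := by
  obtain ⟨C, hC, h1⟩ := hf.bd
  obtain ⟨D, hD, h2⟩ := hg.bd
  refine ⟨hf.cont.add hg.cont, C + D, add_nonneg hC hD, fun x hx => ?_⟩
  rw [add_mul]
  exact (abs_add_le _ _).trans (add_le_add (h1 x hx) (h2 x hx))

lemma neg (hf : Sg n f) : Sg n (fun x => - f x) := by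
  obtain ⟨C, hC, h1⟩ := hf.bd
  exact ⟨hf.cont.neg, C, hC, fun x hx => by rw [abs_neg]; exact h1 x hx⟩

lemma sub (hf : Sg n f) (hg : Sg n g) : Sg n (fun x => f x - g x) := by
  simpa only [sub_eq_add_neg] using hf.add hg.neg

lemma const (c : ℝ) : Sg 0 (fun _ => c) :=
  ⟨continuousOn_const, |c|, abs_nonneg c, fun x _ => by simp⟩

lemma zero : Sg n (fun _ => 0) :=
  ⟨continuousOn_const, 0, le_rfl, fun x _ => by simp⟩

lemma mul0 (hf : Sg n f) (hg : Sg 0 g) : Sg n (fun x => f x * g x) := by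
  simpa using hf.mul hg

lemma zmul (hf : Sg 0 f) (hg : Sg n g) : Sg n (fun x => f x * g x) := by
  simpa using hf.mul hg

lemma const_mul (c : ℝ) (hf : Sg n f) : Sg n (fun x => c * f x) := (const c).zmul hf

lemma pow0 (hf : Sg 0 f) (k : ℕ) : Sg 0 (fun x => f x ^ k) := by
  induction k with
  | zero => simpa using const 1
  | succ k ih => simpa only [pow_succ] using ih.mul0 hf

lemma sum {ι : Type*} (s : Finset ι) {F : ι → E3 → ℝ} (h : ∀ i ∈ s, Sg n (F i)) :
    Sg n (fun x => ∑ i ∈ s, F i x) := by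
  classical
  induction s using Finset.induction_on with
  | empty => simpa using zero
  | insert a s ha ih =>
    simp only [Finset.sum_insert ha]
    exact (h a (by simp)).add (ih fun i hi => h i (by simp [hi]))

lemma inv_norm : Sg (-1) (fun x : E3 => ‖x‖⁻¹) := by
  refine ⟨ContinuousOn.inv₀ continuous_norm.continuousOn fun x hx => by simpa using hx,
    1, zero_le_one, fun x _ => ?_⟩
  rw [zpow_neg_one, one_mul, abs_of_nonneg (by positivity)]

lemma inv_norm_sq : Sg (-2) (fun x : E3 => ‖x‖⁻¹ ^ 2) := by
  simp only [sq]
  exact inv_norm.mul inv_norm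

lemma coord (i : Fin 3) : Sg 1 (fun x : E3 => x i) := by
  refine ⟨by fun_prop, 1, zero_le_one, fun x _ => ?_⟩
  rw [zpow_one, one_mul]
  exact PiLp.norm_apply_le x i

lemma of_continuous (hf : Continuous f) (hs : HasCompactSupport f) : Sg 0 f := by
  obtain ⟨C, hC⟩ := hs.exists_bound_of_continuous hf
  exact ⟨hf.continuousOn, max C 0, le_max_right _ _, fun x _ => by
    simpa using Or.inl (hC x)⟩

lemma congr (hf : Sg n f) (h : ∀ x, x ≠ 0 → g x = f x) : Sg n g :=
  ⟨hf.cont.congr fun x hx => h x hx, by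
    obtain ⟨C, hC, h1⟩ := hf.bd
    exact ⟨C, hC, fun x hx => by rw [h x hx]; exact h1 x hx⟩⟩

lemma aesm (hf : Sg n f) : AEStronglyMeasurable f := by
  have := hf.cont.aestronglyMeasurable (μ := (volume : Measure E3))
    (measurableSet_singleton _).compl
  rwa [restrict_compl_singleton] at this

/-- A compactly supported function which is `O(|x|⁻²)` is integrable. -/
lemma integrable (hf : Sg n f) (hn : -2 ≤ n) {R : ℝ} (hR : ∀ x, R ≤ ‖x‖ → f x = 0) :
    Integrable f := by
  obtain ⟨C, hC, h1⟩ := hf.bd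
  obtain ⟨k, rfl⟩ : ∃ k : ℕ, n = k - 2 := ⟨(n + 2).toNat, by omega⟩
  have hb : IntegrableOn (fun x : E3 => C * ‖x‖ ^ ((k : ℤ) - 2)) (ball 0 R) := by
    rw [integrableOn_fun_norm_addHaar volume (f := fun t => C * t ^ ((k : ℤ) - 2))]
    have hc : Continuous (fun t : ℝ => C * t ^ k) := by fun_prop
    have : IntegrableOn (fun t : ℝ => C * t ^ k) (Set.Ioo 0 R) :=
      (hc.integrableOn_Icc (a := 0) (b := R)).mono_set Set.Ioo_subset_Icc_self
    refine this.congr_fun (fun t ht => ?_) measurableSet_Ioo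
    have ht0 : t ≠ 0 := ht.1.ne'
    simp only [finrank_euclideanSpace, Fintype.card_fin, smul_eq_mul]
    rw [zpow_sub₀ ht0]
    norm_num
    field_simp
  have hi : IntegrableOn f (ball 0 R) := by
    refine Integrable.mono' hb hf.aesm.restrict ?_
    have : ∀ᵐ x : E3 ∂(volume.restrict (ball 0 R)), x ≠ 0 :=
      ae_restrict_of_ae (compl_mem_ae_iff.2 (measure_singleton _))
    filter_upwards [this] with x hx using h1 x hx
  refine (integrableOn_iff_integrable_of_support_subset ?_).1 hi
  intro x hx
  by_contra h
  exact hx (hR x (by simpa using h))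

lemma sphere_cont (hf : Sg n f) {r : ℝ} (hr : 0 < r) :
    Continuous (fun ω : sphere (0 : E3) 1 => f (r • (ω : E3))) :=
  hf.cont.comp_continuous (by fun_prop) fun ω => by
    have := sphere_norm ω
    intro h
    have h0 : (ω : E3) = 0 := by
      rcases smul_eq_zero.1 h with h | h
      · exact absurd h hr.ne'
      · exact h
    simp [h0] at this

lemma sphere_integrable (hf : Sg n f) {r : ℝ} (hr : 0 < r) :
    Integrable (fun ω : sphere (0 : E3) 1 => f (r • (ω : E3))) sphMeas :=
  cont_integrable _ (hf.sphere_cont hr)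

end Sg

/-- The integral over `ℝ³` of a partial derivative vanishes, also when the function is singular
at the origin, provided that the function and its derivative are integrable. -/
lemma integral_lineDeriv_zero (k : Fin 3) {F F' : E3 → ℝ}
    (hF : ∀ x, x ≠ 0 → HasLineDerivAt ℝ F (F' x) x (EuclideanSpace.single k 1))
    (hi : Integrable F) (hi' : Integrable F') : ∫ x, F' x = 0 := by
  let e : (ℝ × (Fin 2 → ℝ)) → E3 := fun p => WithLp.toLp 2 (k.insertNth p.1 p.2 : Fin 3 → ℝ)
  have he : MeasurePreserving e :=
    (PiLp.volume_preserving_toLp (Fin 3)).comp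
      ((volume_preserving_piFinSuccAbove (fun _ : Fin 3 => ℝ) k).symm)
  have hemb : MeasurableEmbedding e :=
    (MeasurableEquiv.toLp 2 (Fin 3 → ℝ)).measurableEmbedding.comp
      (MeasurableEquiv.piFinSuccAbove (fun _ : Fin 3 => ℝ) k).symm.measurableEmbedding
  have j : Integrable (fun p => F (e p)) := (he.integrable_comp_emb hemb).2 hi
  have j' : Integrable (fun p => F' (e p)) := (he.integrable_comp_emb hemb).2 hi'
  rw [← he.integral_comp hemb F', Measure.volume_eq_prod, integral_prod_symm _ j']
  rw [Measure.volume_eq_prod] at j j'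
  refine integral_eq_zero_of_ae ?_
  have hne : ∀ᵐ y : Fin 2 → ℝ, y ≠ 0 := compl_mem_ae_iff.2 (measure_singleton _)
  filter_upwards [j.prod_left_ae, j'.prod_left_ae, hne] with y h1 h2 hy
  refine integral_eq_zero_of_hasDerivAt_of_integrable (f := fun t => F (e (t, y))) ?_ h2 h1
  intro t
  have h0 : e (t, y) ≠ 0 := by
    intro h
    apply hy
    ext l
    have := congrArg (fun z : E3 => z (k.succAbove l)) h
    simpa [e] using this
  have hd := hF _ h0
  have hs : ∀ s, e (s, y) = e (t, y) + (s - t) • EuclideanSpace.single k (1 : ℝ) := by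
    intro s
    ext l
    refine Fin.succAboveCases k ?_ (fun l' => ?_) l
    · simp [e]
    · simp [e]
  unfold HasLineDerivAt at hd
  have h3 := HasDerivAt.comp_sub_const t t (f := fun s => F (e (t, y) + s • EuclideanSpace.single k (1 : ℝ)))
    (by simpa using hd)
  simpa only [← hs] using h3

/-! ### Spherical means -/

lemma sphere_param_continuous {G : ℝ → sphere (0 : E3) 1 → ℝ} (hG : Continuous G.uncurry) :
    Continuous (fun r => ∫ ω, G r ω ∂sphMeas) := by
  have := continuous_parametric_integral_of_continuous (μ := sphMeas) hG (isCompact_univ)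
  simpa using this

/-- Differentiation under the integral over the sphere. -/
lemma sphere_hasDerivAt {f : E3 → ℝ} (hf : ContDiff ℝ 1 f) {k : sphere (0 : E3) 1 → ℝ}
    (hk : Continuous k) (r : ℝ) :
    HasDerivAt (fun r : ℝ => ∫ ω, f (r • (ω : E3)) * k ω ∂sphMeas)
      (∫ ω, fderiv ℝ f (r • (ω : E3)) ω * k ω ∂sphMeas) r := by
  have hfc := hf.continuous
  have hfd := hf.continuous_fderiv one_ne_zero
  obtain ⟨C, hC⟩ := (isCompact_closedBall (0 : E3) (|r| + 1)).exists_bound_of_continuousOn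
    hfd.continuousOn
  have hcont : ∀ s : ℝ, Continuous (fun ω : sphere (0 : E3) 1 => f (s • (ω : E3)) * k ω) := by
    intro s; fun_prop
  have hcont' : ∀ s : ℝ, Continuous
      (fun ω : sphere (0 : E3) 1 => fderiv ℝ f (s • (ω : E3)) ω * k ω) := by
    intro s
    refine Continuous.mul ?_ hk
    exact (hfd.comp (by fun_prop)).clm_apply (by fun_prop)
  refine (hasDerivAt_integral_of_dominated_loc_of_deriv_le (μ := sphMeas)
    (F := fun r (ω : sphere (0 : E3) 1) => f (r • (ω : E3)) * k ω)
    (F' := fun r ω => fderiv ℝ f (r • (ω : E3)) ω * k ω) (bound := fun ω => C * |k ω|)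
    (ball_mem_nhds r one_pos) (.of_forall fun s => ?_) ?_ ?_ ?_ ?_ ?_).2
  · exact (cont_integrable _ (hcont s)).aestronglyMeasurable
  · exact cont_integrable _ (hcont r)
  · exact (cont_integrable _ (hcont' r)).aestronglyMeasurable
  · refine .of_forall fun ω s hs => ?_
    rw [norm_mul]
    refine mul_le_mul_of_nonneg_right ?_ (abs_nonneg _)
    have h1 : ‖s • (ω : E3)‖ ≤ |r| + 1 := by
      rw [norm_smul, sphere_norm, mul_one, norm_eq_abs]
      have : |s - r| < 1 := by simpa [Real.dist_eq] using hs
      have h3 := abs_add_le r (s - r)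
      rw [add_sub_cancel] at h3
      linarith
    have h2 := (fderiv ℝ f (s • (ω : E3))).le_opNorm (ω : E3)
    rw [sphere_norm, mul_one] at h2
    exact h2.trans (hC _ (by simpa using h1))
  · exact cont_integrable _ (by fun_prop)
  · refine .of_forall fun ω s _ => ?_
    refine HasDerivAt.mul_const ?_ _
    have h1 : HasDerivAt (fun s : ℝ => s • (ω : E3)) (ω : E3) s := by
      simpa using (hasDerivAt_id s).smul_const (ω : E3)
    exact (hf.differentiable one_ne_zero _).hasFDerivAt.comp_hasDerivAt s h1

lemma sphere_deriv_continuous {f : E3 → ℝ} (hf : ContDiff ℝ 1 f) {k : sphere (0 : E3) 1 → ℝ}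
    (hk : Continuous k) :
    Continuous (fun r : ℝ => ∫ ω, fderiv ℝ f (r • (ω : E3)) ω * k ω ∂sphMeas) := by
  refine sphere_param_continuous (G := fun r ω => fderiv ℝ f (r • (ω : E3)) ω * k ω) ?_
  refine Continuous.mul (f := fun p : ℝ × sphere (0 : E3) 1 => fderiv ℝ f (p.1 • (p.2 : E3)) p.2)
    ?_ (hk.comp continuous_snd)
  exact ((hf.continuous_fderiv one_ne_zero).comp (by fun_prop)).clm_apply (by fun_prop)

/-- The spherical mean of `f` over the sphere of radius `r`. -/
def sm (f : E3 → ℝ) (r : ℝ) : ℝ := (1 / (4 * π)) * sphInt f r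

lemma sm_hasDerivAt {f : E3 → ℝ} (hf : ContDiff ℝ 1 f) (r : ℝ) :
    HasDerivAt (sm f) ((1 / (4 * π)) * ∫ ω, fderiv ℝ f (r • (ω : E3)) ω ∂sphMeas) r := by
  have := (sphere_hasDerivAt hf (k := fun _ => 1) continuous_const r).const_mul (1 / (4 * π))
  simp only [mul_one] at this
  exact this

lemma sm_deriv {f : E3 → ℝ} (hf : ContDiff ℝ 1 f) (r : ℝ) :
    deriv (sm f) r = (1 / (4 * π)) * ∫ ω, fderiv ℝ f (r • (ω : E3)) ω ∂sphMeas :=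
  (sm_hasDerivAt hf r).deriv

lemma sm_deriv_continuous {f : E3 → ℝ} (hf : ContDiff ℝ 1 f) : Continuous (deriv (sm f)) := by
  have := (sphere_deriv_continuous hf (k := fun _ => 1) continuous_const).const_mul (1 / (4 * π))
  simp only [mul_one] at this
  convert! this using 1
  ext r; exact sm_deriv hf r

lemma sm_continuous {f : E3 → ℝ} (hf : ContDiff ℝ 1 f) : Continuous (sm f) :=
  continuous_iff_continuousAt.2 fun r => (sm_hasDerivAt hf r).continuousAt

lemma sm_zero {f : E3 → ℝ} : sm f 0 = f 0 := by
  have := sphInt_const (f 0) 0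
  simp only [sphInt] at this
  simp only [sm, sphInt, zero_smul]
  rw [this]
  field_simp

lemma sm_integral_bound {C : ℝ} {h : sphere (0 : E3) 1 → ℝ} (hh : ∀ ω, |h ω| ≤ C) :
    |(1 / (4 * π)) * ∫ ω, h ω ∂sphMeas| ≤ C := by
  have h1 := norm_integral_le_of_norm_le_const (μ := sphMeas) (f := h) (C := C)
    (.of_forall hh)
  rw [sphMeas_real_univ, norm_eq_abs] at h1
  rw [abs_mul, abs_of_pos (by positivity)]
  calc _ ≤ 1 / (4 * π) * (C * (4 * π)) := by gcongr
    _ = C := by field_simp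

lemma exists_fderiv_bound {f : E3 → ℝ} (hf : ContDiff ℝ 1 f) (hs : HasCompactSupport f) :
    ∃ C, 0 ≤ C ∧ ∀ x, ‖fderiv ℝ f x‖ ≤ C := by
  obtain ⟨C, hC⟩ := (hs.fderiv ℝ).exists_bound_of_continuous (hf.continuous_fderiv one_ne_zero)
  exact ⟨C, (norm_nonneg _).trans (hC 0), hC⟩

lemma sg_sm {f : E3 → ℝ} (hf : ContDiff ℝ 1 f) (hs : HasCompactSupport f) :
    Sg 0 (fun x => sm f ‖x‖) := by
  obtain ⟨C, hC⟩ := hs.exists_bound_of_continuous hf.continuous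
  refine ⟨((sm_continuous hf).comp continuous_norm).continuousOn, C,
    (norm_nonneg _).trans (hC 0), fun x _ => ?_⟩
  rw [zpow_zero, mul_one]
  exact sm_integral_bound fun ω => hC _

lemma sg_sm_deriv {f : E3 → ℝ} (hf : ContDiff ℝ 1 f) (hs : HasCompactSupport f) :
    Sg 0 (fun x => deriv (sm f) ‖x‖) := by
  obtain ⟨C, hC0, hC⟩ := exists_fderiv_bound hf hs
  refine ⟨((sm_deriv_continuous hf).comp continuous_norm).continuousOn, C, hC0, fun x _ => ?_⟩
  rw [zpow_zero, mul_one, sm_deriv hf]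
  refine sm_integral_bound fun ω => ?_
  have := (fderiv ℝ f (‖x‖ • (ω : E3))).le_opNorm (ω : E3)
  rw [sphere_norm, mul_one] at this
  exact this.trans (hC _)

lemma sg_sub_sm {f : E3 → ℝ} (hf : ContDiff ℝ 1 f) (hs : HasCompactSupport f) :
    Sg 1 (fun x => f x - sm f ‖x‖) := by
  obtain ⟨C, hC0, hC⟩ := exists_fderiv_bound hf hs
  refine ⟨(hf.continuous.sub ((sm_continuous hf).comp continuous_norm)).continuousOn, C * 2,
    by positivity, fun x _ => ?_⟩
  have hL : ∀ y z : E3, |f y - f z| ≤ C * ‖y - z‖ := fun y z =>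
    convex_univ.norm_image_sub_le_of_norm_fderiv_le
      (fun p _ => hf.differentiable one_ne_zero p) (fun p _ => hC p) (Set.mem_univ z)
      (Set.mem_univ y)
  have h1 : f x - sm f ‖x‖ = (1 / (4 * π)) * ∫ ω, (f x - f (‖x‖ • (ω : E3))) ∂sphMeas := by
    have hc := hf.continuous
    rw [integral_sub (integrable_const _) (cont_integrable _ (by fun_prop)), mul_sub]
    have := sphInt_const (f x) 0
    simp only [sphInt] at this
    rw [this]
    simp only [sm, sphInt]
    field_simp
  rw [h1, zpow_one]
  refine sm_integral_bound fun ω => (hL _ _).trans ?_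
  rw [mul_assoc]
  gcongr
  refine (norm_sub_le _ _).trans (le_of_eq ?_)
  rw [norm_smul, sphere_norm, norm_norm]; ring

/-! ### The unit radial field and line derivatives -/

/-- The components `ωᵢ = xᵢ / |x|` of the unit radial field. -/
def om (i : Fin 3) (x : E3) : ℝ := ‖x‖⁻¹ * x i

/-- The `k`-th basis vector. -/
abbrev bv (k : Fin 3) : E3 := EuclideanSpace.single k 1

lemma sg_om (i : Fin 3) : Sg 0 (om i) := by
  unfold om
  exact Sg.inv_norm.mul (Sg.coord i)

lemma om_sq {x : E3} (hx : x ≠ 0) : ∑ i, om i x ^ 2 = 1 := by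
  have h : ‖x‖ ≠ 0 := norm_ne_zero_iff.2 hx
  simp only [om, mul_pow, ← Finset.mul_sum]
  rw [← EuclideanSpace.real_norm_sq_eq]
  field_simp

lemma om_smul {r : ℝ} (hr : 0 < r) (i : Fin 3) (ω : sphere (0 : E3) 1) :
    om i (r • (ω : E3)) = (ω : E3) i := by
  simp only [om, norm_smul, sphere_norm, norm_of_nonneg hr.le, PiLp.smul_apply, smul_eq_mul]
  field_simp

lemma norm_smul_sphere {r : ℝ} (hr : 0 < r) (ω : sphere (0 : E3) 1) : ‖r • (ω : E3)‖ = r := by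
  rw [norm_smul, sphere_norm, norm_of_nonneg hr.le, mul_one]

lemma smul_sphere_ne {r : ℝ} (hr : 0 < r) (ω : sphere (0 : E3) 1) : r • (ω : E3) ≠ 0 := by
  rw [← norm_ne_zero_iff, norm_smul_sphere hr]; exact hr.ne'

lemma hld_norm {x : E3} (hx : x ≠ 0) (k : Fin 3) :
    HasLineDerivAt ℝ (fun y : E3 => ‖y‖) (om k x) x (bv k) := by
  unfold HasLineDerivAt
  have h1 : HasDerivAt (fun t : ℝ => x + t • bv k) (bv k) 0 := by
    simpa using ((hasDerivAt_id (0 : ℝ)).smul_const (bv k)).const_add x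
  have := hasDerivAt_norm_curve h1 (by simpa using hx)
  convert! this using 1
  simp [om, bv, EuclideanSpace.inner_single_right]
  ring

lemma hld_coord (x : E3) (i k : Fin 3) :
    HasLineDerivAt ℝ (fun y : E3 => y i) (if i = k then 1 else 0) x (bv k) := by
  unfold HasLineDerivAt
  have : HasDerivAt (fun t : ℝ => x i + t * (if i = k then 1 else 0)) (if i = k then 1 else 0) 0 := by
    simpa using ((hasDerivAt_id (0 : ℝ)).mul_const (if i = k then (1 : ℝ) else 0)).const_add (x i)
  simpa [bv, Pi.single_apply] using this

lemma hld_pd {f : E3 → ℝ} {x : E3} (hf : DifferentiableAt ℝ f x) (k : Fin 3) :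
    HasLineDerivAt ℝ f (pd k f x) x (bv k) := hf.hasFDerivAt.hasLineDerivAt _

lemma HasLineDerivAt.rmul {f g : E3 → ℝ} {a b : ℝ} {x v : E3} (hf : HasLineDerivAt ℝ f a x v)
    (hg : HasLineDerivAt ℝ g b x v) :
    HasLineDerivAt ℝ (fun y => f y * g y) (a * g x + f x * b) x v := by
  have h := HasDerivAt.mul hf hg
  simp only [zero_smul, add_zero] at h
  exact h

lemma HasLineDerivAt.radd {f g : E3 → ℝ} {a b : ℝ} {x v : E3} (hf : HasLineDerivAt ℝ f a x v)
    (hg : HasLineDerivAt ℝ g b x v) :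
    HasLineDerivAt ℝ (fun y => f y + g y) (a + b) x v := HasDerivAt.add hf hg

lemma HasLineDerivAt.rsub {f g : E3 → ℝ} {a b : ℝ} {x v : E3} (hf : HasLineDerivAt ℝ f a x v)
    (hg : HasLineDerivAt ℝ g b x v) :
    HasLineDerivAt ℝ (fun y => f y - g y) (a - b) x v := HasDerivAt.sub hf hg

lemma HasLineDerivAt.rconst_mul {f : E3 → ℝ} {a : ℝ} {x v : E3} (c : ℝ)
    (hf : HasLineDerivAt ℝ f a x v) :
    HasLineDerivAt ℝ (fun y => c * f y) (c * a) x v := HasDerivAt.const_mul c hf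

lemma HasLineDerivAt.rsum {ι : Type*} {s : Finset ι} {f : ι → E3 → ℝ} {a : ι → ℝ} {x v : E3}
    (hf : ∀ i ∈ s, HasLineDerivAt ℝ (f i) (a i) x v) :
    HasLineDerivAt ℝ (fun y => ∑ i ∈ s, f i y) (∑ i ∈ s, a i) x v :=
  HasDerivAt.fun_sum hf

lemma hld_comp {φ : ℝ → ℝ} {φ' : ℝ} {f : E3 → ℝ} {a : ℝ} {x v : E3}
    (hφ : HasDerivAt φ φ' (f x)) (hf : HasLineDerivAt ℝ f a x v) :
    HasLineDerivAt ℝ (fun y => φ (f y)) (φ' * a) x v := by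
  unfold HasLineDerivAt at *
  exact HasDerivAt.comp (h₂ := φ) 0 (by simpa using hφ) hf

lemma hld_inv_norm {x : E3} (hx : x ≠ 0) (k : Fin 3) :
    HasLineDerivAt ℝ (fun y : E3 => ‖y‖⁻¹) (-(‖x‖⁻¹ ^ 2 * om k x)) x (bv k) := by
  have h := hld_comp (hasDerivAt_inv (norm_ne_zero_iff.2 hx)) (hld_norm hx k)
  convert! h using 1
  rw [inv_pow]; ring

lemma hld_om {x : E3} (hx : x ≠ 0) (i k : Fin 3) :
    HasLineDerivAt ℝ (om i) (‖x‖⁻¹ * ((if i = k then 1 else 0) - om i x * om k x)) x (bv k) := by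
  have h := (hld_inv_norm hx k).rmul (hld_coord x i k)
  convert! h using 1
  simp only [om]
  ring

lemma hld_sm {f : E3 → ℝ} (hf : ContDiff ℝ 1 f) {x : E3} (hx : x ≠ 0) (k : Fin 3) :
    HasLineDerivAt ℝ (fun y => sm f ‖y‖) (deriv (sm f) ‖x‖ * om k x) x (bv k) :=
  hld_comp (sm_hasDerivAt hf ‖x‖).differentiableAt.hasDerivAt (hld_norm hx k)

lemma pd_sub_sm {f : E3 → ℝ} (hf : ContDiff ℝ 1 f) {x : E3} (hx : x ≠ 0) (k : Fin 3) :
    pd k (fun y => f y - sm f ‖y‖) x = pd k f x - deriv (sm f) ‖x‖ * om k x := by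
  have hn : DifferentiableAt ℝ (fun y : E3 => ‖y‖) x :=
    (contDiffAt_norm ℝ hx (n := 1)).differentiableAt one_ne_zero
  have hs : DifferentiableAt ℝ (fun y : E3 => sm f ‖y‖) x :=
    DifferentiableAt.comp (g := sm f) x (sm_hasDerivAt hf ‖x‖).differentiableAt hn
  have h1 := hf.differentiable one_ne_zero x
  have h2 : HasLineDerivAt ℝ (fun y => f y - sm f ‖y‖) _ x (bv k) := hld_pd (h1.sub hs) k
  have h3 := (hld_pd h1 k).rsub (hld_sm hf hx k)
  exact HasDerivAt.unique h2 h3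

lemma fderiv_eq_sum_pd (f : E3 → ℝ) (x y : E3) : fderiv ℝ f x y = ∑ k, y k * pd k f x := by
  have : y = ∑ k, y k • bv k := by
    ext l; simp [bv, Pi.single_apply]
  conv_lhs => rw [this]
  simp [pd, map_sum]

/-! ### The energy without second derivatives -/

/-- On compactly supported functions, the growth exponent at the origin may be lowered. -/
lemma Sg.lower {n : ℤ} {f : E3 → ℝ} (hf : Sg n f) {R : ℝ} (hR0 : 0 < R)
    (hR : ∀ x, R ≤ ‖x‖ → f x = 0) : Sg (n - 1) f := by
  obtain ⟨C, hC, h⟩ := hf.bd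
  refine ⟨hf.cont, C * R, by positivity, fun x hx => ?_⟩
  have hn : 0 < ‖x‖ := norm_pos_iff.2 hx
  by_cases hxR : R ≤ ‖x‖
  · rw [hR x hxR, abs_zero]; positivity
  · refine (h x hx).trans ?_
    rw [zpow_sub_one₀ hn.ne', mul_assoc]
    gcongr
    rw [mul_left_comm, ← div_eq_mul_inv]
    have : 1 ≤ R / ‖x‖ := (one_le_div hn).2 (not_le.1 hxR).le
    exact le_mul_of_one_le_right (by positivity) this

lemma pd_contDiff {f : E3 → ℝ} (hf : ContDiff ℝ (⊤ : ℕ∞) f) (k : Fin 3) :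
    ContDiff ℝ (⊤ : ℕ∞) (pd k f) := by
  unfold pd
  exact (hf.fderiv_right (m := (⊤ : ℕ∞)) (by norm_cast)).clm_apply contDiff_const

lemma pd_zero_off {f : E3 → ℝ} {R : ℝ} (h : ∀ x, R < ‖x‖ → f x = 0) (k : Fin 3) :
    ∀ x, R < ‖x‖ → pd k f x = 0 := by
  intro x hx
  have : f =ᶠ[nhds x] fun _ => 0 := by
    filter_upwards [(isOpen_lt continuous_const continuous_norm).mem_nhds hx] with y hy using h y hy
  simp [pd, this.fderiv_eq]

lemma sg_of_contDiff {f : E3 → ℝ} (hf : ContDiff ℝ (⊤ : ℕ∞) f) {R : ℝ}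
    (h : ∀ x, R < ‖x‖ → f x = 0) : Sg 0 f := by
  refine Sg.of_continuous hf.continuous (HasCompactSupport.of_support_subset_isCompact
    (isCompact_closedBall (0 : E3) R) fun x hx => ?_)
  by_contra hh
  exact hx (h x (by simpa using hh))

lemma compactSupport_of_zero_off {f : E3 → ℝ} {R : ℝ} (h : ∀ x, R < ‖x‖ → f x = 0) :
    HasCompactSupport f := by
  refine HasCompactSupport.of_support_subset_isCompact
    (isCompact_closedBall (0 : E3) R) fun x hx => ?_
  by_contra hh
  exact hx (h x (by simpa using hh))

/-- A smooth vector field vanishing outside the ball of radius `R`. -/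
structure TF (u : E3 → Fin 3 → ℝ) (R : ℝ) : Prop where
  pos : 0 < R
  sm : ∀ i, ContDiff ℝ (⊤ : ℕ∞) (fun y => u y i)
  off : ∀ i x, R < ‖x‖ → u x i = 0

lemma IsTestOn.exists_TF {u : E3 → Fin 3 → ℝ} (hu : IsTestOn Set.univ u) : ∃ R, TF u R := by
  obtain ⟨R, hR⟩ := hu.2.1.isCompact.isBounded.subset_closedBall (0 : E3)
  refine ⟨max R 1, by positivity, fun i => contDiff_pi.1 hu.1 i, fun i x hx => ?_⟩
  have : x ∉ tsupport u := fun h => by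
    have := hR h
    simp only [mem_closedBall, dist_zero_right] at this
    exact absurd ((le_max_left R 1).trans_lt hx) (not_lt.2 this)
  rw [image_eq_zero_of_notMem_tsupport this]; rfl

namespace TF

variable {u : E3 → Fin 3 → ℝ} {R : ℝ}

lemma c1 (h : TF u R) (i : Fin 3) : ContDiff ℝ 1 (fun y => u y i) := (h.sm i).of_le (by norm_cast)

lemma cs (h : TF u R) (i : Fin 3) : HasCompactSupport (fun y => u y i) :=
  compactSupport_of_zero_off (h.off i)

lemma sgU (h : TF u R) (i : Fin 3) : Sg 0 (fun y => u y i) := sg_of_contDiff (h.sm i) (h.off i)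

lemma dsm (h : TF u R) (k i : Fin 3) : ContDiff ℝ (⊤ : ℕ∞) (pd k (fun y => u y i)) :=
  pd_contDiff (h.sm i) k

lemma doff (h : TF u R) (k i : Fin 3) : ∀ x, R < ‖x‖ → pd k (fun y => u y i) x = 0 :=
  pd_zero_off (h.off i) k

lemma sgD (h : TF u R) (k i : Fin 3) : Sg 0 (pd k (fun y => u y i)) :=
  sg_of_contDiff (h.dsm k i) (h.doff k i)

lemma hoff (h : TF u R) (l k i : Fin 3) : ∀ x, R < ‖x‖ → pd l (pd k (fun y => u y i)) x = 0 :=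
  pd_zero_off (h.doff k i) l

lemma sgH (h : TF u R) (l k i : Fin 3) : Sg 0 (pd l (pd k (fun y => u y i))) :=
  sg_of_contDiff (pd_contDiff (h.dsm k i) l) (h.hoff l k i)

lemma divsm (h : TF u R) : ContDiff ℝ (⊤ : ℕ∞) (divg u) := by
  unfold divg
  exact ContDiff.sum fun k _ => h.dsm k k

lemma divoff (h : TF u R) : ∀ x, R < ‖x‖ → divg u x = 0 := by
  intro x hx
  exact Finset.sum_eq_zero fun k _ => h.doff k k x hx

lemma sgdiv (h : TF u R) : Sg 0 (divg u) := sg_of_contDiff h.divsm h.divoff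

lemma goff (h : TF u R) (k : Fin 3) : ∀ x, R < ‖x‖ → pd k (divg u) x = 0 :=
  pd_zero_off h.divoff k

lemma sgG (h : TF u R) (k : Fin 3) : Sg 0 (pd k (divg u)) :=
  sg_of_contDiff (pd_contDiff h.divsm k) (h.goff k)

end TF

lemma smooth_diff {f : E3 → ℝ} (hf : ContDiff ℝ (⊤ : ℕ∞) f) (x : E3) : DifferentiableAt ℝ f x :=
  hf.differentiable (by simp) x

/-- `u·ω`. -/
def uw (u : E3 → Fin 3 → ℝ) (x : E3) : ℝ := ∑ j, u x j * om j x

/-- `∂ₖu·ω`. -/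
def dw (u : E3 → Fin 3 → ℝ) (k : Fin 3) (x : E3) : ℝ := ∑ j, pd k (fun y => u y j) x * om j x

/-- The `k`-th component of the field `V` with `(Lu)·(Φu) + div V` free of second derivatives. -/
def Vf (α : ℝ) (u : E3 → Fin 3 → ℝ) (k : Fin 3) (x : E3) : ℝ :=
  cA α * (‖x‖⁻¹ * ((∑ i, pd k (fun y => u y i) x * u x i) +
    (α / (α + 2)) * (dw u k x * uw u x) +
    α * (divg u x * (u x k + (α / (α + 2)) * (om k x * uw u x)))))

/-- Derivative of `ωᵢ` in direction `k`. -/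
def dom (i k : Fin 3) (x : E3) : ℝ := ‖x‖⁻¹ * ((if i = k then 1 else 0) - om i x * om k x)

/-- The derivative of `u·ω` in direction `k`. -/
def duw (u : E3 → Fin 3 → ℝ) (k : Fin 3) (x : E3) : ℝ :=
  ∑ j, (pd k (fun y => u y j) x * om j x + u x j * dom j k x)

/-- The derivative of `dw u k` in direction `k`. -/
def ddw (u : E3 → Fin 3 → ℝ) (k : Fin 3) (x : E3) : ℝ :=
  ∑ j, (pd k (pd k (fun y => u y j)) x * om j x + pd k (fun y => u y j) x * dom j k x)

/-- The derivative of `Vf α u k` in direction `k`. -/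
def Vf' (α : ℝ) (u : E3 → Fin 3 → ℝ) (k : Fin 3) (x : E3) : ℝ :=
  cA α * (-(‖x‖⁻¹ ^ 2 * om k x) * ((∑ i, pd k (fun y => u y i) x * u x i) +
    (α / (α + 2)) * (dw u k x * uw u x) +
    α * (divg u x * (u x k + (α / (α + 2)) * (om k x * uw u x)))) +
    ‖x‖⁻¹ * ((∑ i, (pd k (pd k (fun y => u y i)) x * u x i
        + pd k (fun y => u y i) x * pd k (fun y => u y i) x)) +
    (α / (α + 2)) * (ddw u k x * uw u x + dw u k x * duw u k x) +
    α * (pd k (divg u) x * (u x k + (α / (α + 2)) * (om k x * uw u x)) +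
      divg u x * (pd k (fun y => u y k) x +
        (α / (α + 2)) * (dom k k x * uw u x + om k x * duw u k x)))))

section
variable {u : E3 → Fin 3 → ℝ} {R : ℝ}

lemma hld_uw (h : TF u R) {x : E3} (hx : x ≠ 0) (k : Fin 3) :
    HasLineDerivAt ℝ (uw u) (duw u k x) x (bv k) :=
  HasLineDerivAt.rsum fun j _ => (hld_pd (smooth_diff (h.sm j) x) k).rmul (hld_om hx j k)

lemma hld_dw (h : TF u R) {x : E3} (hx : x ≠ 0) (k : Fin 3) :
    HasLineDerivAt ℝ (dw u k) (ddw u k x) x (bv k) :=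
  HasLineDerivAt.rsum fun j _ => (hld_pd (smooth_diff (h.dsm k j) x) k).rmul (hld_om hx j k)

lemma hld_Vf (α : ℝ) (h : TF u R) {x : E3} (hx : x ≠ 0) (k : Fin 3) :
    HasLineDerivAt ℝ (Vf α u k) (Vf' α u k x) x (bv k) := by
  have hU := fun i => hld_pd (smooth_diff (h.sm i) x) k
  have hD := fun i => hld_pd (smooth_diff (h.dsm k i) x) k
  have hdiv := hld_pd (smooth_diff h.divsm x) k
  exact ((hld_inv_norm hx k).rmul (((HasLineDerivAt.rsum fun i _ => (hD i).rmul (hU i)).radd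
    (((hld_dw h hx k).rmul (hld_uw h hx k)).rconst_mul _)).radd
    ((hdiv.rmul ((hU k).radd (((hld_om hx k k).rmul (hld_uw h hx k)).rconst_mul _))).rconst_mul
      α))).rconst_mul _

lemma sg_dom (i k : Fin 3) : Sg (-1) (dom i k) :=
  Sg.inv_norm.mul0 ((Sg.const _).sub ((sg_om i).mul0 (sg_om k)))

lemma sg_uw (h : TF u R) : Sg 0 (uw u) := Sg.sum _ fun j _ => (h.sgU j).mul0 (sg_om j)

lemma sg_dw (h : TF u R) (k : Fin 3) : Sg 0 (dw u k) :=
  Sg.sum _ fun j _ => (h.sgD k j).mul0 (sg_om j)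

/-- A function vanishing for `|x| > R` vanishes for `|x| ≥ R + 1`. -/
lemma off_succ {f : E3 → ℝ} (h : ∀ x, R < ‖x‖ → f x = 0) : ∀ x, R + 1 ≤ ‖x‖ → f x = 0 :=
  fun x hx => h x (by linarith)

lemma TF.low (h : TF u R) {n : ℤ} {f : E3 → ℝ} (hf : Sg n f) (h0 : ∀ x, R < ‖x‖ → f x = 0) :
    Sg (n - 1) f := hf.lower (by linarith [h.pos]) (off_succ h0)

lemma TF.integrable {n : ℤ} {f : E3 → ℝ} (hf : Sg n f) (hn : -2 ≤ n)
    (h0 : ∀ x, R < ‖x‖ → f x = 0) : Integrable f := hf.integrable hn (off_succ h0)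

lemma sg_duw (h : TF u R) (k : Fin 3) : Sg (-1) (duw u k) :=
  Sg.sum _ fun j _ => (((h.low (h.sgD k j) (h.doff k j))).mul0 (sg_om j)).add
    ((h.sgU j).zmul (sg_dom j k))

lemma sg_ddw (h : TF u R) (k : Fin 3) : Sg (-1) (ddw u k) :=
  Sg.sum _ fun j _ => (((h.low (h.sgH k k j) (h.hoff k k j))).mul0 (sg_om j)).add
    ((h.sgD k j).zmul (sg_dom j k))

lemma sg_Vf (α : ℝ) (h : TF u R) (k : Fin 3) : Sg (-1) (Vf α u k) := by
  have hdw := sg_dw h k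
  have huw := sg_uw h
  exact Sg.const_mul _ (Sg.inv_norm.mul0 (((Sg.sum _ fun i _ => (h.sgD k i).mul0 (h.sgU i)).add
    (Sg.const_mul _ (hdw.mul0 huw))).add (Sg.const_mul _ (h.sgdiv.mul0 ((h.sgU k).add
      (Sg.const_mul _ ((sg_om k).mul0 huw)))))))

lemma sg_Vf' (α : ℝ) (h : TF u R) (k : Fin 3) : Sg (-2) (Vf' α u k) := by
  have hdw := sg_dw h k
  have huw := sg_uw h
  have hduw := sg_duw h k
  have hddw := sg_ddw h k
  refine Sg.const_mul _ (Sg.add ((Sg.inv_norm_sq.mul0 (sg_om k)).neg.mul0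
    (((Sg.sum _ fun i _ => (h.sgD k i).mul0 (h.sgU i)).add
    (Sg.const_mul _ (hdw.mul0 huw))).add (Sg.const_mul _ (h.sgdiv.mul0 ((h.sgU k).add
      (Sg.const_mul _ ((sg_om k).mul0 huw))))))) ?_)
  refine (Sg.inv_norm.mul (n := -1) ?_)
  refine ((Sg.sum _ fun i _ => ?_).add ?_).add ?_
  · exact ((h.low (h.sgH k k i) (h.hoff k k i)).mul0 (h.sgU i)).add
      ((h.low (h.sgD k i) (h.doff k i)).mul0 (h.sgD k i))
  · exact Sg.const_mul _ ((hddw.mul0 huw).add (hdw.zmul hduw))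
  · refine Sg.const_mul _ (((h.low (h.sgG k) (h.goff k)).mul0
      ((h.sgU k).add (Sg.const_mul _ ((sg_om k).mul0 huw)))).add
      (h.sgdiv.zmul ((h.low (h.sgD k k) (h.doff k k)).add
        (Sg.const_mul _ (((sg_dom k k).mul0 huw).add ((sg_om k).zmul hduw))))))

lemma Vf_off (α : ℝ) (h : TF u R) (k : Fin 3) : ∀ x, R < ‖x‖ → Vf α u k x = 0 := by
  intro x hx
  simp [Vf, dw, h.doff _ _ x hx, h.divoff x hx]

lemma Vf'_off (α : ℝ) (h : TF u R) (k : Fin 3) : ∀ x, R < ‖x‖ → Vf' α u k x = 0 := by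
  intro x hx
  simp [Vf', dw, ddw, h.doff _ _ x hx, h.divoff x hx, h.hoff _ _ _ x hx, h.goff _ x hx]

lemma integral_Vf' (α : ℝ) (h : TF u R) (k : Fin 3) :
    Integrable (Vf' α u k) ∧ ∫ x, Vf' α u k x = 0 := by
  have h1 := TF.integrable (sg_Vf' α h k) le_rfl (Vf'_off α h k)
  exact ⟨h1, integral_lineDeriv_zero k (fun x hx => hld_Vf α h hx k)
    (TF.integrable (sg_Vf α h k) (by norm_num) (Vf_off α h k)) h1⟩

/-- The quadratic form in the gradient. -/
def b1 (α : ℝ) (u : E3 → Fin 3 → ℝ) (x : E3) : ℝ :=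
  (∑ k, ∑ i, pd k (fun y => u y i) x ^ 2) + (α / (α + 2)) * (∑ k, dw u k x ^ 2) +
    α * divg u x ^ 2 + α * (α / (α + 2)) * (divg u x * ∑ k, om k x * dw u k x)

/-- The term `(u·ω) div u - (u·∇)u·ω`. -/
def crossT (u : E3 → Fin 3 → ℝ) (x : E3) : ℝ := uw u x * divg u x - ∑ k, u x k * dw u k x

/-- The radial derivative of `½(|u|² + 3β(u·ω)²)`. -/
def radT (α : ℝ) (u : E3 → Fin 3 → ℝ) (x : E3) : ℝ :=
  (∑ k, ∑ i, om k x * pd k (fun y => u y i) x * u x i) +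
    3 * (α / (α + 2)) * (uw u x * ∑ k, om k x * dw u k x)

/-- The energy density without second derivatives. -/
def Qf (α : ℝ) (u : E3 → Fin 3 → ℝ) (x : E3) : ℝ :=
  cA α * (‖x‖⁻¹ * b1 α u x - (α / (α + 2)) * (‖x‖⁻¹ ^ 2 * crossT u x) - ‖x‖⁻¹ ^ 2 * radT α u x)

end

set_option maxHeartbeats 1000000 in
/-- The identity `(Lu)·(Φu) = Qf - div V` at a point, as a polynomial identity: `d k i`, `L k i`,
`G i`, `δ`, `ρ` stand for `∂ₖuᵢ`, `∂ₖ²uᵢ`, `∂ᵢ div u`, `div u`, `|x|⁻¹`, and `U` for `u`. -/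
lemma algebra_id (c ρ α β : ℝ) (hβ : β * (α + 2) = α) (ω U : Fin 3 → ℝ) (hω : ∑ i, ω i ^ 2 = 1)
    (d L : Fin 3 → Fin 3 → ℝ) (G : Fin 3 → ℝ) (δ : ℝ) (hδ : δ = ∑ k, d k k) :
    ∑ i, ∑ j, (-(∑ k, L k i) - α * G i) * (c * ρ * ((if i = j then 1 else 0) + β * (ω i * ω j)))
      * U j =
    c * (ρ * ((∑ k, ∑ i, d k i ^ 2) + β * (∑ k, (∑ j, d k j * ω j) ^ 2) + α * δ ^ 2 +
      α * β * (δ * ∑ k, ω k * (∑ j, d k j * ω j)))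
      - β * (ρ ^ 2 * ((∑ j, U j * ω j) * δ - ∑ k, U k * (∑ j, d k j * ω j)))
      - ρ ^ 2 * ((∑ k, ∑ i, ω k * d k i * U i) +
        3 * β * ((∑ j, U j * ω j) * ∑ k, ω k * (∑ j, d k j * ω j)))) -
    ∑ k, c * (-(ρ ^ 2 * ω k) * ((∑ i, d k i * U i) + β * ((∑ j, d k j * ω j) * (∑ j, U j * ω j)) +
      α * (δ * (U k + β * (ω k * ∑ j, U j * ω j)))) +
      ρ * ((∑ i, (L k i * U i + d k i * d k i)) +
      β * ((∑ j, (L k j * ω j + d k j * (ρ * ((if j = k then 1 else 0) - ω j * ω k))))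
          * (∑ j, U j * ω j) +
        (∑ j, d k j * ω j) *
          (∑ j, (d k j * ω j + U j * (ρ * ((if j = k then 1 else 0) - ω j * ω k))))) +
      α * (G k * (U k + β * (ω k * ∑ j, U j * ω j)) +
        δ * (d k k + β * ((ρ * ((if k = k then 1 else 0) - ω k * ω k)) * (∑ j, U j * ω j) +
          ω k * (∑ j, (d k j * ω j + U j * (ρ * ((if j = k then 1 else 0) - ω j * ω k))))))))) := by
  have e : ∀ k, (∑ j, (d k j * ω j + U j * (ρ * ((if j = k then 1 else 0) - ω j * ω k))))
      = (∑ j, d k j * ω j) + ρ * (U k - (∑ j, U j * ω j) * ω k) := by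
    intro k
    simp only [mul_sub, Finset.sum_add_distrib, Finset.sum_sub_distrib, Finset.sum_mul,
      mul_ite, mul_one, mul_zero, Finset.sum_ite_eq', Finset.mem_univ, if_true, Finset.mul_sum]
    have : ∀ j, U j * (ρ * (ω j * ω k)) = ρ * (U j * ω j * ω k) := fun j => by ring
    simp only [this]
    ring
  have e2 : ∀ k, (∑ j, (L k j * ω j + d k j * (ρ * ((if j = k then 1 else 0) - ω j * ω k))))
      = (∑ j, L k j * ω j) + ρ * (d k k - (∑ j, d k j * ω j) * ω k) := by
    intro k
    simp only [mul_sub, Finset.sum_add_distrib, Finset.sum_sub_distrib, Finset.sum_mul,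
      mul_ite, mul_one, mul_zero, Finset.sum_ite_eq', Finset.mem_univ, if_true, Finset.mul_sum]
    have : ∀ j, d k j * (ρ * (ω j * ω k)) = ρ * (d k j * ω j * ω k) := fun j => by ring
    simp only [this]
    ring
  simp only [e, e2]
  set s := ∑ j, U j * ω j with hs
  simp only [Fin.sum_univ_three] at hω hδ hs
  simp only [Fin.sum_univ_three, Fin.isValue, if_true, Fin.reduceEq, if_false]
  rw [hs]
  subst hδ
  linear_combination
    (-3 * c * ρ ^ 2 * α * β * (d 0 0 + d 1 1 + d 2 2) * (U 0 * ω 0 + U 1 * ω 1 + U 2 * ω 2)) * hω +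
    (c * ρ ^ 2 * (d 0 0 + d 1 1 + d 2 2) * (U 0 * ω 0 + U 1 * ω 1 + U 2 * ω 2)) * hβ

/-- Off the origin, `(Lu)·(Φu)` is `Qf` minus a divergence. -/
lemma energy_pointwise {α : ℝ} (hα : 0 ≤ α) (u : E3 → Fin 3 → ℝ) {x : E3} (hx : x ≠ 0) :
    ∑ i, ∑ j, lame α u x i * Phi α x i j * u x j = Qf α u x - ∑ k, Vf' α u k x := by
  have hβ : (α / (α + 2)) * (α + 2) = α := div_mul_cancel₀ _ (by positivity)
  have h := algebra_id (cA α) ‖x‖⁻¹ α (α / (α + 2)) hβ (fun i => om i x) (u x) (om_sq hx)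
    (fun k i => pd k (fun y => u y i) x) (fun k i => pd k (pd k (fun y => u y i)) x)
    (fun k => pd k (divg u) x) (divg u x) rfl
  have e : ∀ i j, Phi α x i j = cA α * ‖x‖⁻¹ * ((if i = j then 1 else 0) +
      (α / (α + 2)) * (om i x * om j x)) := by
    intro i j
    have hn : ‖x‖ ≠ 0 := norm_ne_zero_iff.2 hx
    simp only [Phi, om]
    congr 2
    field_simp
  simp only [e, lame, lap]
  exact h

section
variable {u : E3 → Fin 3 → ℝ} {R : ℝ}

lemma sg_b1 (α : ℝ) (h : TF u R) : Sg 0 (b1 α u) := by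
  have hdw := sg_dw h
  have huw := sg_uw h
  exact (((Sg.sum _ fun k _ => Sg.sum _ fun i _ => (h.sgD k i).pow0 2).add
    (Sg.const_mul _ (Sg.sum _ fun k _ => (hdw k).pow0 2))).add
    (Sg.const_mul _ (h.sgdiv.pow0 2))).add (Sg.const_mul _ (h.sgdiv.mul0
      (Sg.sum _ fun k _ => (sg_om k).mul0 (hdw k))))

lemma sg_crossT (h : TF u R) : Sg 0 (crossT u) :=
  ((sg_uw h).mul0 h.sgdiv).sub (Sg.sum _ fun k _ => (h.sgU k).mul0 (sg_dw h k))

lemma sg_radT (α : ℝ) (h : TF u R) : Sg 0 (radT α u) :=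
  (Sg.sum _ fun k _ => Sg.sum _ fun i _ => ((sg_om k).mul0 (h.sgD k i)).mul0 (h.sgU i)).add
    (Sg.const_mul _ ((sg_uw h).mul0 (Sg.sum _ fun k _ => (sg_om k).mul0 (sg_dw h k))))

lemma b1_off (α : ℝ) (h : TF u R) : ∀ x, R < ‖x‖ → b1 α u x = 0 := by
  intro x hx
  simp [b1, dw, h.doff _ _ x hx, h.divoff x hx]

lemma crossT_off (h : TF u R) : ∀ x, R < ‖x‖ → crossT u x = 0 := by
  intro x hx
  simp [crossT, dw, h.doff _ _ x hx, h.divoff x hx]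

lemma radT_off (α : ℝ) (h : TF u R) : ∀ x, R < ‖x‖ → radT α u x = 0 := by
  intro x hx
  simp [radT, dw, h.doff _ _ x hx]

lemma int_b1 (α : ℝ) (h : TF u R) : Integrable (fun x => ‖x‖⁻¹ * b1 α u x) :=
  TF.integrable (Sg.inv_norm.mul0 (sg_b1 α h)) (by norm_num)
    fun x hx => by rw [b1_off α h x hx, mul_zero]

lemma int_crossT (h : TF u R) : Integrable (fun x => ‖x‖⁻¹ ^ 2 * crossT u x) :=
  TF.integrable (Sg.inv_norm_sq.mul0 (sg_crossT h)) le_rfl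
    fun x hx => by rw [crossT_off h x hx, mul_zero]

lemma int_radT (α : ℝ) (h : TF u R) : Integrable (fun x => ‖x‖⁻¹ ^ 2 * radT α u x) :=
  TF.integrable (Sg.inv_norm_sq.mul0 (sg_radT α h)) le_rfl
    fun x hx => by rw [radT_off α h x hx, mul_zero]

lemma energy_eq {α : ℝ} (hα : 0 ≤ α) (h : TF u R) :
    ∫ x : E3, ∑ i, ∑ j, lame α u x i * Phi α x i j * u x j =
      cA α * ((∫ x, ‖x‖⁻¹ * b1 α u x) - (α / (α + 2)) * (∫ x, ‖x‖⁻¹ ^ 2 * crossT u x)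
        - ∫ x, ‖x‖⁻¹ ^ 2 * radT α u x) := by
  have hne : ∀ᵐ x : E3, x ≠ 0 := compl_mem_ae_iff.2 (measure_singleton _)
  have i1 := int_b1 α h
  have i2 := (int_crossT h).const_mul (α / (α + 2))
  have i3 := int_radT α h
  have i4 : Integrable (fun x => ‖x‖⁻¹ * b1 α u x - (α / (α + 2)) * (‖x‖⁻¹ ^ 2 * crossT u x)) :=
    i1.sub i2
  have i5 : Integrable (Qf α u) := (i4.sub i3).const_mul _
  have i6 : Integrable (fun x => ∑ k, Vf' α u k x) :=
    integrable_finsetSum _ fun k _ => (integral_Vf' α h k).1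
  have e1 : ∫ x : E3, ∑ i, ∑ j, lame α u x i * Phi α x i j * u x j =
      ∫ x, (Qf α u x - ∑ k, Vf' α u k x) := by
    refine integral_congr_ae ?_
    filter_upwards [hne] with x hx using energy_pointwise hα u hx
  rw [e1, integral_sub i5 i6, integral_finsetSum _ fun k _ => (integral_Vf' α h k).1]
  simp only [(integral_Vf' α h _).2, Finset.sum_const_zero, sub_zero]
  simp only [Qf]
  rw [integral_const_mul, integral_sub i4 i3, integral_sub i1 i2, integral_const_mul]

end

/-! ### The radial term -/

section
variable {u : E3 → Fin 3 → ℝ} {R : ℝ}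

/-- The weight `½(δᵢⱼ + 3βωᵢωⱼ)`. -/
def kk (β : ℝ) (i j : Fin 3) (ω : sphere (0 : E3) 1) : ℝ :=
  (1 / 2) * ((if i = j then 1 else 0) + 3 * β * ((ω : E3) i * (ω : E3) j))

lemma kk_cont (β : ℝ) (i j : Fin 3) : Continuous (kk β i j) := by
  unfold kk; fun_prop

lemma kk_quad (β : ℝ) (U : Fin 3 → ℝ) (ω : sphere (0 : E3) 1) :
    ∑ i, ∑ j, U i * U j * kk β i j ω =
      (1 / 2) * ∑ i, U i ^ 2 + (3 * β / 2) * (∑ i, U i * (ω : E3) i) ^ 2 := by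
  simp only [kk, Fin.sum_univ_three, Fin.isValue, if_true, Fin.reduceEq, if_false]
  ring

/-- `½∫_{S²} (|u(rω)|² + 3β(u(rω)·ω)²) dσ(ω)`. -/
def Hr (β : ℝ) (u : E3 → Fin 3 → ℝ) (r : ℝ) : ℝ :=
  ∑ i, ∑ j, ∫ ω, (u (r • (ω : E3)) i * u (r • (ω : E3)) j) * kk β i j ω ∂sphMeas

lemma Hr_zero (β : ℝ) (u : E3 → Fin 3 → ℝ) : Hr β u 0 = 2 * π * (1 + β) * ∑ i, u 0 i ^ 2 := by
  have hi : ∀ i j, Integrable (fun ω : sphere (0 : E3) 1 => u 0 i * u 0 j * kk β i j ω) sphMeas :=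
    fun i j => cont_integrable _ (continuous_const.mul (kk_cont β i j))
  simp only [Hr, zero_smul]
  simp_rw [← integral_finsetSum _ fun j _ => hi _ j]
  rw [← integral_finsetSum _ fun i _ => integrable_finsetSum _ fun j _ => hi i j]
  simp only [kk_quad]
  rw [integral_add (integrable_const _) (cont_integrable _ (by fun_prop)), integral_const_mul,
    integral_const_mul, sph_second_moment']
  have := sphInt_const (∑ i, u 0 i ^ 2) 0
  simp only [sphInt] at this
  rw [this]
  ring

lemma Hr_hasDerivAt (α : ℝ) (h : TF u R) {r : ℝ} (hr : 0 < r) :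
    HasDerivAt (Hr (α / (α + 2)) u) (sphInt (radT α u) r) r := by
  have hc : ∀ i j, ContDiff ℝ 1 (fun y => u y i * u y j) := fun i j => (h.c1 i).mul (h.c1 j)
  have h1 : HasDerivAt (Hr (α / (α + 2)) u) _ r := HasDerivAt.fun_sum fun i (_ : i ∈ Finset.univ) =>
    HasDerivAt.fun_sum fun j (_ : j ∈ Finset.univ) =>
      sphere_hasDerivAt (hc i j) (kk_cont (α / (α + 2)) i j) r
  convert! h1 using 1
  have hi : ∀ i j, Integrable (fun ω : sphere (0 : E3) 1 =>
      fderiv ℝ (fun y => u y i * u y j) (r • (ω : E3)) ω * kk (α / (α + 2)) i j ω) sphMeas := by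
    intro i j
    refine cont_integrable _ (Continuous.mul ?_ (kk_cont _ _ _))
    exact (((hc i j).continuous_fderiv one_ne_zero).comp (by fun_prop)).clm_apply (by fun_prop)
  simp_rw [← integral_finsetSum _ fun j _ => hi _ j]
  rw [← integral_finsetSum _ fun i _ => integrable_finsetSum _ fun j _ => hi i j]
  unfold sphInt
  congr 1
  ext ω
  have hd : ∀ i j, fderiv ℝ (fun y => u y i * u y j) (r • (ω : E3)) ω =
      u (r • (ω : E3)) i * (∑ k, (ω : E3) k * pd k (fun y => u y j) (r • (ω : E3))) +
      u (r • (ω : E3)) j * (∑ k, (ω : E3) k * pd k (fun y => u y i) (r • (ω : E3))) := by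
    intro i j
    rw [fderiv_fun_mul (smooth_diff (h.sm i) _) (smooth_diff (h.sm j) _)]
    simp [fderiv_eq_sum_pd]
  simp only [hd, radT, uw, dw, om_smul hr, kk]
  simp only [Fin.sum_univ_three, Fin.isValue, if_true, Fin.reduceEq, if_false]
  ring

lemma sphInt_inv_norm_sq (g : E3 → ℝ) {r : ℝ} (hr : 0 < r) :
    r ^ 2 * sphInt (fun x => ‖x‖⁻¹ ^ 2 * g x) r = sphInt g r := by
  unfold sphInt
  simp only [norm_smul_sphere hr]
  rw [integral_const_mul]
  field_simp

lemma sphInt_inv_norm (g : E3 → ℝ) {r : ℝ} (hr : 0 < r) :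
    r ^ 2 * sphInt (fun x => ‖x‖⁻¹ * g x) r = r * sphInt g r := by
  unfold sphInt
  simp only [norm_smul_sphere hr]
  rw [integral_const_mul]
  field_simp

/-- The radial term of the energy produces the value of `u` at the origin. -/
lemma integral_radT (α : ℝ) (h : TF u R) :
    ∫ x, ‖x‖⁻¹ ^ 2 * radT α u x = - (2 * π * (1 + α / (α + 2)) * ∑ i, u 0 i ^ 2) := by
  obtain ⟨hi, he⟩ := polar _ (int_radT α h)
  rw [he, setIntegral_congr_fun measurableSet_Ioi fun r hr => sphInt_inv_norm_sq _ hr]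
  have hi' : IntegrableOn (fun r => sphInt (radT α u) r) (Set.Ioi 0) :=
    hi.congr_fun (fun r hr => sphInt_inv_norm_sq _ hr) measurableSet_Ioi
  have hcont : Continuous (Hr (α / (α + 2)) u) := by
    have hc : ∀ i j, ContDiff ℝ 1 (fun y => u y i * u y j) := fun i j => (h.c1 i).mul (h.c1 j)
    unfold Hr
    refine continuous_finsetSum _ fun i _ => continuous_finsetSum _ fun j _ => ?_
    exact continuous_iff_continuousAt.2 fun r =>
      (sphere_hasDerivAt (hc i j) (kk_cont (α / (α + 2)) i j) r).continuousAt
  have hlim : Tendsto (Hr (α / (α + 2)) u) atTop (nhds 0) := by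
    refine tendsto_const_nhds.congr' ?_
    filter_upwards [eventually_gt_atTop R] with r hr
    have hr0 : 0 < r := h.pos.trans hr
    have : ∀ i (ω : sphere (0 : E3) 1), u (r • (ω : E3)) i = 0 := fun i ω =>
      h.off i _ (by rwa [norm_smul_sphere hr0])
    simp [Hr, this]
  rw [integral_Ioi_of_hasDerivAt_of_tendsto hcont.continuousWithinAt
    (fun r hr => Hr_hasDerivAt α h hr) hi' hlim, Hr_zero, zero_sub]

/-! ### The cross term -/

/-- `(p·ω) div u - (p·∇)u·ω` for a field `p`. -/
def cross2 (p u : E3 → Fin 3 → ℝ) (x : E3) : ℝ := uw p x * divg u x - ∑ k, p x k * dw u k x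

/-- The field of spherical means of `u`. -/
def pf (u : E3 → Fin 3 → ℝ) (x : E3) (i : Fin 3) : ℝ := sm (fun y => u y i) ‖x‖

/-- The radial derivative of `pf u`. -/
def af (u : E3 → Fin 3 → ℝ) (x : E3) (i : Fin 3) : ℝ := deriv (sm (fun y => u y i)) ‖x‖

/-- The fluctuation `v = u - ū`. -/
def vf (u : E3 → Fin 3 → ℝ) (x : E3) (i : Fin 3) : ℝ := u x i - sm (fun y => u y i) ‖x‖

lemma TF.sgP (h : TF u R) (i : Fin 3) : Sg 0 (fun x => pf u x i) := sg_sm (h.c1 i) (h.cs i)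
lemma TF.sgA (h : TF u R) (i : Fin 3) : Sg 0 (fun x => af u x i) := sg_sm_deriv (h.c1 i) (h.cs i)
lemma TF.sgV (h : TF u R) (i : Fin 3) : Sg 1 (fun x => vf u x i) := sg_sub_sm (h.c1 i) (h.cs i)

lemma TF.hldP (h : TF u R) {x : E3} (hx : x ≠ 0) (k i : Fin 3) :
    HasLineDerivAt ℝ (fun x => pf u x i) (af u x i * om k x) x (bv k) := hld_sm (h.c1 i) hx k

/-- `qᵢⱼ = ūⱼuᵢ - ūᵢuⱼ`. -/
def qf (u : E3 → Fin 3 → ℝ) (i j : Fin 3) (x : E3) : ℝ := pf u x j * u x i - pf u x i * u x j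

/-- The derivative of `qf u i j` in direction `k`. -/
def qf' (u : E3 → Fin 3 → ℝ) (k i j : Fin 3) (x : E3) : ℝ :=
  (af u x j * om k x * u x i + pf u x j * pd k (fun y => u y i) x) -
    (af u x i * om k x * u x j + pf u x i * pd k (fun y => u y j) x)

lemma hld_qf (h : TF u R) {x : E3} (hx : x ≠ 0) (k i j : Fin 3) :
    HasLineDerivAt ℝ (qf u i j) (qf' u k i j x) x (bv k) :=
  ((h.hldP hx k j).rmul (hld_pd (smooth_diff (h.sm i) x) k)).rsub
    ((h.hldP hx k i).rmul (hld_pd (smooth_diff (h.sm j) x) k))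

lemma sg_qf (h : TF u R) (i j : Fin 3) : Sg 1 (qf u i j) := by
  have h1 := ((h.sgP j).zmul (h.sgV i)).sub ((h.sgP i).zmul (h.sgV j))
  refine h1.congr fun x _ => ?_
  simp only [qf, vf, pf]; ring

lemma sg_qf' (h : TF u R) (k i j : Fin 3) : Sg 0 (qf' u k i j) :=
  ((((h.sgA j).mul0 (sg_om k)).mul0 (h.sgU i)).add ((h.sgP j).mul0 (h.sgD k i))).sub
    ((((h.sgA i).mul0 (sg_om k)).mul0 (h.sgU j)).add ((h.sgP i).mul0 (h.sgD k j)))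

/-- The field `|x|⁻²((ū·ω)u - (u·ω)ū)`. -/
def Ff (u : E3 → Fin 3 → ℝ) (i : Fin 3) (x : E3) : ℝ :=
  (‖x‖⁻¹ * ‖x‖⁻¹) * ∑ j, om j x * qf u i j x

/-- The derivative of `Ff u i` in direction `i`. -/
def Ff' (u : E3 → Fin 3 → ℝ) (i : Fin 3) (x : E3) : ℝ :=
  (-(‖x‖⁻¹ ^ 2 * om i x) * ‖x‖⁻¹ + ‖x‖⁻¹ * -(‖x‖⁻¹ ^ 2 * om i x)) * (∑ j, om j x * qf u i j x) +
  (‖x‖⁻¹ * ‖x‖⁻¹) * ∑ j, (dom j i x * qf u i j x + om j x * qf' u i i j x)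

lemma hld_Ff (h : TF u R) {x : E3} (hx : x ≠ 0) (i : Fin 3) :
    HasLineDerivAt ℝ (Ff u i) (Ff' u i x) x (bv i) :=
  ((hld_inv_norm hx i).rmul (hld_inv_norm hx i)).rmul
    (HasLineDerivAt.rsum fun j _ => (hld_om hx j i).rmul (hld_qf h hx i i j))

lemma sg_Ff (h : TF u R) (i : Fin 3) : Sg (-1) (Ff u i) :=
  (Sg.inv_norm.mul Sg.inv_norm).mul (n := 1) (Sg.sum _ fun j _ => (sg_om j).zmul (sg_qf h i j))

lemma sg_Ff' (h : TF u R) (i : Fin 3) : Sg (-2) (Ff' u i) := by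
  have hn := (Sg.inv_norm_sq.mul0 (sg_om i)).neg
  refine Sg.add ?_ ?_
  · exact ((hn.mul Sg.inv_norm).add (Sg.inv_norm.mul hn)).mul (n := 1)
      (Sg.sum _ fun j _ => (sg_om j).zmul (sg_qf h i j))
  · exact (Sg.inv_norm.mul Sg.inv_norm).mul (n := 0) (Sg.sum _ fun j _ =>
      ((sg_dom j i).mul (sg_qf h i j)).add ((sg_om j).mul0 (sg_qf' h i i j)))

lemma Ff_off (h : TF u R) (i : Fin 3) : ∀ x, R < ‖x‖ → Ff u i x = 0 := by
  intro x hx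
  simp [Ff, qf, h.off _ x hx]

lemma Ff'_off (h : TF u R) (i : Fin 3) : ∀ x, R < ‖x‖ → Ff' u i x = 0 := by
  intro x hx
  simp [Ff', qf, qf', h.off _ x hx, h.doff _ _ x hx]

lemma integral_Ff' (h : TF u R) (k : Fin 3) :
    Integrable (Ff' u k) ∧ ∫ x, Ff' u k x = 0 := by
  have h1 := TF.integrable (sg_Ff' h k) le_rfl (Ff'_off h k)
  exact ⟨h1, integral_lineDeriv_zero k (fun x hx => hld_Ff h hx k)
    (TF.integrable (sg_Ff h k) (by norm_num) (Ff_off h k)) h1⟩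

lemma sum_Ff' (u : E3 → Fin 3 → ℝ) (x : E3) :
    ∑ i, Ff' u i x = ‖x‖⁻¹ ^ 2 * cross2 (pf u) u x := by
  simp only [Ff', cross2, qf, qf', uw, dw, divg, dom]
  simp only [Fin.sum_univ_three, Fin.isValue, if_true, Fin.reduceEq, if_false]
  ring

lemma integral_cross_pf (h : TF u R) :
    Integrable (fun x => ‖x‖⁻¹ ^ 2 * cross2 (pf u) u x) ∧
      ∫ x, ‖x‖⁻¹ ^ 2 * cross2 (pf u) u x = 0 := by
  simp only [← sum_Ff']
  refine ⟨integrable_finsetSum _ fun k _ => (integral_Ff' h k).1, ?_⟩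
  rw [integral_finsetSum _ fun k _ => (integral_Ff' h k).1]
  simp [(integral_Ff' h _).2]

/-- In the cross term, `u` may be replaced by its fluctuation `v`. -/
lemma integral_crossT (h : TF u R) :
    Integrable (fun x => ‖x‖⁻¹ ^ 2 * cross2 (vf u) u x) ∧
    ∫ x, ‖x‖⁻¹ ^ 2 * crossT u x = ∫ x, ‖x‖⁻¹ ^ 2 * cross2 (vf u) u x := by
  obtain ⟨h1, h2⟩ := integral_cross_pf h
  have h3 := int_crossT h
  have e : (fun x => ‖x‖⁻¹ ^ 2 * cross2 (vf u) u x) =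
      fun x => ‖x‖⁻¹ ^ 2 * crossT u x - ‖x‖⁻¹ ^ 2 * cross2 (pf u) u x := by
    ext x
    simp only [cross2, crossT, uw, vf, pf, Fin.sum_univ_three]
    ring
  rw [e]
  refine ⟨h3.sub h1, ?_⟩
  rw [integral_sub h3 h1, h2, sub_zero]

end

/-! ### The inequality on a sphere, in abstract form -/

lemma le_of_sq_le_mul {x a b : ℝ} (ha : 0 ≤ a) (hb : 0 ≤ b) (h : x ^ 2 ≤ a ^ 2 * b ^ 2) :
    |x| ≤ a * b := by
  rw [← mul_pow] at h
  exact abs_le_of_sq_le_sq h (mul_nonneg ha hb)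

/-- Pointwise Cauchy-Schwarz against a unit vector. -/
lemma unit_cs (ω W : Fin 3 → ℝ) (hω : ∑ i, ω i ^ 2 = 1) :
    (∑ i, W i * ω i) ^ 2 ≤ ∑ i, W i ^ 2 := by
  have := Finset.sum_mul_sq_le_sq_mul_sq Finset.univ W ω
  rwa [hω, mul_one] at this

/-- The quadratic form left over after the cross term is estimated. Here `0.85 ≥ √(5/7)` comes from
the Poincaré inequality, `1.75 ≥ √3` from `|div v|² ≤ 3|∇v|²`, and `q` stands for `1/√2`. -/
lemma quad_core {q w1 w2 : ℝ} (h1 : 0 ≤ w1) (h2 : 0 ≤ w2) (N : ℝ) (hw2 : w2 ≤ 1.75 * w1)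
    (hql : 0.7 ≤ q) : 0 ≤ N ^ 2 + q * w1 ^ 2 + q * (w1 * w2) - 0.85 * w1 * (w2 + N) := by
  have e1 : (0.85 - q) * (w1 * w2) ≤ 0.15 * (w1 * (1.75 * w1)) := by
    have hp : 0 ≤ w1 * w2 := mul_nonneg h1 h2
    calc (0.85 - q) * (w1 * w2) ≤ 0.15 * (w1 * w2) :=
          mul_le_mul_of_nonneg_right (by linarith) hp
      _ ≤ _ := by gcongr
  have e2 : 0.7 * w1 ^ 2 ≤ q * w1 ^ 2 := mul_le_mul_of_nonneg_right hql (sq_nonneg _)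
  nlinarith [sq_nonneg (N - 0.425 * w1), sq_nonneg w1]

/-- The algebraic core of the radial inequality. -/
lemma scalar_ineq {α β r w0 w1 w2 N V X1 X2 X3 T c0 c1 c2 : ℝ} (hα : 0 ≤ α)
    (hβ : β = α / (α + 2)) (hr : 0 < r) (h1 : 0 ≤ w1)
    (hN : 0 ≤ N) (h21 : w2 ^ 2 ≤ 3 * w1 ^ 2) (h2 : 0 ≤ w2)
    (hV2 : V ^ 2 ≤ (5 / 7) * (r ^ 2 * w1 ^ 2))
    (hX1 : -(w1 * w0 / √3) ≤ X1) (hX2 : -(w2 * w0 / √3) ≤ X2) (hX3 : -(w2 * w1) ≤ X3)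
    (hT : T ≤ V * w2 + V * N)
    (hc0 : c0 = w0 ^ 2) (hc1 : c1 = w1 ^ 2) (hc2 : c2 = w2 ^ 2) :
    r * ((1 + (α / 3) * ((2 * α + 3) / (α + 2))) * w0 ^ 2 + (1 - (1 / √2) * (α / (α + 2))) * w1 ^ 2
      + α * w2 ^ 2 + 2 * (-(α / (2 * √3))) * (w0 * w1)
      + 2 * (-(α / (2 * √3)) * ((3 * α + 4) / (α + 2))) * (w0 * w2)
      + 2 * (-(α / 2) * ((α + (√2)⁻¹) / (α + 2))) * (w1 * w2)) ≤
    r * (c1 + c0 + β * N ^ 2 + (α + β + α * β) * (c0 / 3) + α * X1 + α * c2 +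
      (2 * α + α * β) * X2 + α * β * X3) - β * T := by
  have hβ0 : 0 ≤ β := by rw [hβ]; positivity
  have hα2 : α + 2 ≠ 0 := by positivity
  have hs3 : √3 ≠ 0 := by positivity
  set q := (√2)⁻¹ with hq
  have hq0 : 0 < q := by positivity
  have hq2 : q ^ 2 = 1 / 2 := by rw [hq, inv_pow, sq_sqrt (by norm_num)]; norm_num
  have hql : 0.7 ≤ q := by
    by_contra hh
    push Not at hh
    nlinarith
  have hVle : V ≤ 0.85 * (r * w1) := by
    refine le_of_sq_le_sq (by rw [mul_pow, mul_pow]; linarith [mul_nonneg (sq_nonneg r) (sq_nonneg w1)]) (by positivity)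
  have hw2 : w2 ≤ 1.75 * w1 := by
    refine le_of_sq_le_sq (by nlinarith [sq_nonneg w1]) (by positivity)
  have hTr : T ≤ r * (0.85 * w1 * (w2 + N)) := by
    calc T ≤ V * (w2 + N) := by linarith
      _ ≤ 0.85 * (r * w1) * (w2 + N) := by gcongr
      _ = _ := by ring
  have hcore := quad_core h1 h2 N hw2 hql
  have a1 : -(α * (w1 * w0 / √3)) ≤ α * X1 := by
    rw [← mul_neg]
    exact mul_le_mul_of_nonneg_left hX1 hα
  have a2 : -((2 * α + α * β) * (w2 * w0 / √3)) ≤ (2 * α + α * β) * X2 := by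
    rw [← mul_neg]
    exact mul_le_mul_of_nonneg_left hX2 (by positivity)
  have a3 : -(α * β * (w2 * w1)) ≤ α * β * X3 := by
    rw [← mul_neg]
    exact mul_le_mul_of_nonneg_left hX3 (by positivity)
  have key : r * (w1 ^ 2 + w0 ^ 2 + β * N ^ 2 + (α + β + α * β) * (w0 ^ 2 / 3)
      - α * (w1 * w0 / √3) + α * w2 ^ 2 - (2 * α + α * β) * (w2 * w0 / √3) - α * β * (w2 * w1))
      - β * (r * (0.85 * w1 * (w2 + N)))
      - r * ((1 + (α / 3) * ((2 * α + 3) / (α + 2))) * w0 ^ 2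
      + (1 - q * (α / (α + 2))) * w1 ^ 2
      + α * w2 ^ 2 + 2 * (-(α / (2 * √3))) * (w0 * w1)
      + 2 * (-(α / (2 * √3)) * ((3 * α + 4) / (α + 2))) * (w0 * w2)
      + 2 * (-(α / 2) * ((α + q) / (α + 2))) * (w1 * w2)) =
      β * r * (N ^ 2 + q * w1 ^ 2 + q * (w1 * w2) - 0.85 * w1 * (w2 + N)) := by
    rw [hβ]
    clear_value q
    field_simp
    ring
  have hpos : 0 ≤ β * r * (N ^ 2 + q * w1 ^ 2 + q * (w1 * w2) - 0.85 * w1 * (w2 + N)) := by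
    positivity
  have a4 := mul_le_mul_of_nonneg_left hTr hβ0
  have a5 : r * (w1 ^ 2 + w0 ^ 2 + β * N ^ 2 + (α + β + α * β) * (w0 ^ 2 / 3)
      - α * (w1 * w0 / √3) + α * w2 ^ 2 - (2 * α + α * β) * (w2 * w0 / √3) - α * β * (w2 * w1)) ≤
      r * (c1 + c0 + β * N ^ 2 + (α + β + α * β) * (c0 / 3) + α * X1 + α * c2 +
      (2 * α + α * β) * X2 + α * β * X3) := by
    refine mul_le_mul_of_nonneg_left ?_ hr.le
    rw [hc0, hc1, hc2]
    linarith
  rw [one_div]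
  linarith

/-- The form `b1` in terms of the decomposition `D_k u_i = M_ki + ω_k A_i` of the gradient. -/
lemma b1_decomp (α β : ℝ) (hβ : β * (α + 2) = α) (ω A : Fin 3 → ℝ) (hω : ∑ i, ω i ^ 2 = 1)
    (M : Fin 3 → Fin 3 → ℝ) :
    (∑ k, ∑ i, (M k i + A i * ω k) ^ 2) + β * (∑ k, (∑ j, (M k j + A j * ω k) * ω j) ^ 2) +
      α * (∑ k, (M k k + A k * ω k)) ^ 2 + α * β * ((∑ k, (M k k + A k * ω k)) *
        ∑ k, ω k * (∑ j, (M k j + A j * ω k) * ω j)) =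
    (∑ k, ∑ i, M k i ^ 2) + 2 * (∑ i, A i * ∑ k, ω k * M k i) + (∑ i, A i ^ 2) +
      β * (∑ k, (∑ j, M k j * ω j) ^ 2) + (α + β + α * β) * (∑ i, A i * ω i) ^ 2 +
      α * ((∑ k, ω k * ∑ j, M k j * ω j) * ∑ i, A i * ω i) + α * (∑ k, M k k) ^ 2 +
      (2 * α + α * β) * ((∑ k, M k k) * ∑ i, A i * ω i) +
      α * β * ((∑ k, M k k) * (∑ k, ω k * ∑ j, M k j * ω j)) := by
  have e : ∀ k, ∑ j, (M k j + A j * ω k) * ω j = (∑ j, M k j * ω j) + ω k * ∑ i, A i * ω i := by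
    intro k
    rw [Finset.mul_sum, ← Finset.sum_add_distrib]
    exact Finset.sum_congr rfl fun j _ => by ring
  have e2 : ∑ k, (M k k + A k * ω k) = (∑ k, M k k) + ∑ i, A i * ω i := Finset.sum_add_distrib
  simp only [e, e2]
  set s := ∑ i, A i * ω i
  set d := ∑ k, M k k
  set n := fun k => ∑ j, M k j * ω j with hn
  have en : ∀ k, ∑ j, M k j * ω j = n k := fun k => rfl
  simp only [en]
  simp only [Fin.sum_univ_three] at hω ⊢
  linear_combination (A 0 ^ 2 + A 1 ^ 2 + A 2 ^ 2 + β * s ^ 2 + α * β * s ^ 2 + α * β * d * s) * hω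
    + (n 0 * ω 0 + n 1 * ω 1 + n 2 * ω 2) * s * hβ

lemma integral_sq_nonneg' {X : Type*} [MeasurableSpace X] (μ : Measure X) (f : X → ℝ) :
    0 ≤ ∫ x, f x ^ 2 ∂μ := integral_nonneg fun _ => sq_nonneg _

/-- Cauchy-Schwarz on the sphere, with upper bounds for the two factors. -/
lemma sphere_cs {f g : sphere (0 : E3) 1 → ℝ} (hf : Continuous f) (hg : Continuous g) {a b : ℝ}
    (ha : 0 ≤ a) (hb : 0 ≤ b) (h1 : ∫ ω, f ω ^ 2 ∂sphMeas ≤ a ^ 2)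
    (h2 : ∫ ω, g ω ^ 2 ∂sphMeas ≤ b ^ 2) : |∫ ω, f ω * g ω ∂sphMeas| ≤ a * b := by
  have := integral_cs sphMeas f g (cont_integrable _ (hf.pow 2)) (cont_integrable _ (hg.pow 2))
    (cont_integrable _ (hf.mul hg))
  exact le_of_sq_le_mul ha hb (this.trans (mul_le_mul h1 h2 (integral_sq_nonneg' _ _) (by positivity)))

/-- The inequality on a sphere of radius `r`, for `∇u = M + ω ⊗ A` and `v = W`. -/
lemma sphere_ineq {α r : ℝ} (hα : 0 ≤ α) (hr : 0 < r) (A : Fin 3 → ℝ)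
    (M : Fin 3 → Fin 3 → sphere (0 : E3) 1 → ℝ) (W : Fin 3 → sphere (0 : E3) 1 → ℝ)
    (hM : ∀ k i, Continuous (M k i)) (hW : ∀ i, Continuous (W i))
    (hM0 : ∀ i, ∫ ω, ∑ k, (ω : E3) k * M k i ω ∂sphMeas = 0)
    (hP : ∫ ω, ∑ i, W i ω ^ 2 ∂sphMeas ≤
      (5 / 7) * (r ^ 2 * ∫ ω, ∑ k, ∑ i, M k i ω ^ 2 ∂sphMeas))
    (w0 w1 w2 : ℝ) (hw0 : w0 = √(4 * π * ∑ i, A i ^ 2))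
    (hw1 : w1 = √(∫ ω, ∑ k, ∑ i, M k i ω ^ 2 ∂sphMeas))
    (hw2 : w2 = √(∫ ω, (∑ k, M k k ω) ^ 2 ∂sphMeas)) :
    r * ((1 + (α / 3) * ((2 * α + 3) / (α + 2))) * w0 ^ 2 + (1 - (1 / √2) * (α / (α + 2))) * w1 ^ 2
      + α * w2 ^ 2 + 2 * (-(α / (2 * √3))) * (w0 * w1)
      + 2 * (-(α / (2 * √3)) * ((3 * α + 4) / (α + 2))) * (w0 * w2)
      + 2 * (-(α / 2) * ((α + (√2)⁻¹) / (α + 2))) * (w1 * w2)) ≤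
    r * (∫ ω, ((∑ k, ∑ i, (M k i ω + A i * (ω : E3) k) ^ 2) +
        (α / (α + 2)) * (∑ k, (∑ j, (M k j ω + A j * (ω : E3) k) * (ω : E3) j) ^ 2) +
      α * (∑ k, (M k k ω + A k * (ω : E3) k)) ^ 2 +
      α * (α / (α + 2)) * ((∑ k, (M k k ω + A k * (ω : E3) k)) *
        ∑ k, (ω : E3) k * (∑ j, (M k j ω + A j * (ω : E3) k) * (ω : E3) j))) ∂sphMeas)
    - (α / (α + 2)) * ∫ ω, ((∑ i, W i ω * (ω : E3) i) * (∑ k, M k k ω)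
        - ∑ k, W k ω * ∑ j, M k j ω * (ω : E3) j) ∂sphMeas := by
  have hβ : (α / (α + 2)) * (α + 2) = α := div_mul_cancel₀ _ (by positivity)
  have h0 : 0 ≤ w0 := by rw [hw0]; positivity
  have h1 : 0 ≤ w1 := by rw [hw1]; positivity
  have h2 : 0 ≤ w2 := by rw [hw2]; positivity
  have s0 : w0 ^ 2 = 4 * π * ∑ i, A i ^ 2 := by
    rw [hw0, sq_sqrt]; exact mul_nonneg (by positivity) (Finset.sum_nonneg fun i _ => sq_nonneg _)
  have s1 : w1 ^ 2 = ∫ ω, ∑ k, ∑ i, M k i ω ^ 2 ∂sphMeas := by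
    rw [hw1, sq_sqrt]; exact integral_nonneg fun ω => by positivity
  have s2 : w2 ^ 2 = ∫ ω, (∑ k, M k k ω) ^ 2 ∂sphMeas := by
    rw [hw2, sq_sqrt]; exact integral_nonneg fun ω => by positivity
  let n : Fin 3 → sphere (0 : E3) 1 → ℝ := fun k ω => ∑ j, M k j ω * (ω : E3) j
  let ν : sphere (0 : E3) 1 → ℝ := fun ω => ∑ k, (ω : E3) k * n k ω
  let s : sphere (0 : E3) 1 → ℝ := fun ω => ∑ i, A i * (ω : E3) i
  let d : sphere (0 : E3) 1 → ℝ := fun ω => ∑ k, M k k ω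
  let wr : sphere (0 : E3) 1 → ℝ := fun ω => ∑ i, W i ω * (ω : E3) i
  have cn : ∀ k, Continuous (n k) := fun k => by fun_prop
  have cν : Continuous ν := by fun_prop
  have cs : Continuous s := by fun_prop
  have cd : Continuous d := by fun_prop
  have cwr : Continuous wr := by fun_prop
  set N := √(∫ ω, ∑ k, n k ω ^ 2 ∂sphMeas) with hN
  set V := √(∫ ω, ∑ i, W i ω ^ 2 ∂sphMeas) with hV
  have sN : N ^ 2 = ∫ ω, ∑ k, n k ω ^ 2 ∂sphMeas := by
    rw [hN, sq_sqrt]; exact integral_nonneg fun ω => by positivity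
  have sV : V ^ 2 = ∫ ω, ∑ i, W i ω ^ 2 ∂sphMeas := by
    rw [hV, sq_sqrt]; exact integral_nonneg fun ω => by positivity
  have N0 : 0 ≤ N := sqrt_nonneg _
  have V0 : 0 ≤ V := sqrt_nonneg _
  have iM : Continuous (fun ω => ∑ k, ∑ i, M k i ω ^ 2) := by fun_prop
  have hn_le : ∀ ω, ∑ k, n k ω ^ 2 ≤ ∑ k, ∑ i, M k i ω ^ 2 := fun ω =>
    Finset.sum_le_sum fun k _ => unit_cs (fun i => (ω : E3) i) (fun j => M k j ω) (sphere_sum_sq ω)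
  have hν_le : ∀ ω, ν ω ^ 2 ≤ ∑ k, n k ω ^ 2 := fun ω => by
    have := unit_cs (fun i => (ω : E3) i) (fun j => n j ω) (sphere_sum_sq ω)
    simpa only [ν, mul_comm] using this
  have bν : ∫ ω, ν ω ^ 2 ∂sphMeas ≤ w1 ^ 2 := by
    rw [s1]
    exact integral_mono (cont_integrable _ (cν.pow 2)) (cont_integrable _ iM)
      fun ω => (hν_le ω).trans (hn_le ω)
  have bs : ∫ ω, s ω ^ 2 ∂sphMeas = w0 ^ 2 / 3 := by
    have := sph_second_moment' A
    rw [s0]; simp only [s]; rw [this]; ring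
  have s3 : (w0 / √3) ^ 2 = w0 ^ 2 / 3 := by rw [div_pow, sq_sqrt (by norm_num)]
  have bd : ∫ ω, d ω ^ 2 ∂sphMeas = w2 ^ 2 := s2.symm
  have bwr : ∫ ω, wr ω ^ 2 ∂sphMeas ≤ V ^ 2 := by
    rw [sV]
    exact integral_mono (cont_integrable _ (cwr.pow 2)) (cont_integrable _ (by fun_prop))
      fun ω => unit_cs (fun i => (ω : E3) i) (fun j => W j ω) (sphere_sum_sq ω)
  have X1 : -(w1 * w0 / √3) ≤ ∫ ω, ν ω * s ω ∂sphMeas := by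
    have := sphere_cs cν cs h1 (show 0 ≤ w0 / √3 by positivity) bν (by rw [bs, s3])
    rw [mul_div_assoc]; exact (abs_le.1 this).1
  have X2 : -(w2 * w0 / √3) ≤ ∫ ω, d ω * s ω ∂sphMeas := by
    have := sphere_cs cd cs h2 (show 0 ≤ w0 / √3 by positivity) bd.le (by rw [bs, s3])
    rw [mul_div_assoc]; exact (abs_le.1 this).1
  have X3 : -(w2 * w1) ≤ ∫ ω, d ω * ν ω ∂sphMeas :=
    (abs_le.1 (sphere_cs cd cν h2 h1 bd.le bν)).1
  have h21 : w2 ^ 2 ≤ 3 * w1 ^ 2 := by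
    rw [s1, s2, ← integral_const_mul]
    refine integral_mono (cont_integrable _ (cd.pow 2)) (cont_integrable _ (by fun_prop)) fun ω => ?_
    simp only [Fin.sum_univ_three]
    nlinarith [sq_nonneg (M 0 0 ω - M 1 1 ω), sq_nonneg (M 0 0 ω - M 2 2 ω),
      sq_nonneg (M 1 1 ω - M 2 2 ω), sq_nonneg (M 0 1 ω), sq_nonneg (M 0 2 ω), sq_nonneg (M 1 0 ω),
      sq_nonneg (M 1 2 ω), sq_nonneg (M 2 0 ω), sq_nonneg (M 2 1 ω)]
  have hT : ∫ ω, (wr ω * d ω - ∑ k, W k ω * n k ω) ∂sphMeas ≤ V * w2 + V * N := by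
    have i1 : Integrable (fun ω => wr ω * d ω) sphMeas := cont_integrable _ (by fun_prop)
    have i2 : Integrable (fun ω => ∑ k, W k ω * n k ω) sphMeas := cont_integrable _ (by fun_prop)
    rw [integral_sub i1 i2]
    have t1 := (abs_le.1 (sphere_cs cwr cd V0 h2 bwr bd.le)).2
    have cW : Continuous (fun ω => √(∑ i, W i ω ^ 2)) := by fun_prop
    have cN : Continuous (fun ω => √(∑ i, n i ω ^ 2)) := by fun_prop
    have t2 := (abs_le.1 (sphere_cs cW cN V0 N0
      (by rw [sV]; refine le_of_eq (integral_congr_ae (.of_forall fun ω => ?_))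
          exact sq_sqrt (by positivity))
      (by rw [sN]; refine le_of_eq (integral_congr_ae (.of_forall fun ω => ?_))
          exact sq_sqrt (by positivity)))).2
    have t3 : -∫ ω, ∑ k, W k ω * n k ω ∂sphMeas ≤
        ∫ ω, √(∑ i, W i ω ^ 2) * √(∑ i, n i ω ^ 2) ∂sphMeas := by
      rw [← integral_neg]
      refine integral_mono (cont_integrable _ (by fun_prop)) (cont_integrable _ (cW.mul cN))
        fun ω => ?_
      have := Real.sum_mul_le_sqrt_mul_sqrt Finset.univ (fun i => - W i ω) (fun i => n i ω)
      simpa using this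
    linarith
  have hA : ∫ ω : sphere (0 : E3) 1, ∑ i, A i * ∑ k, (ω : E3) k * M k i ω ∂sphMeas = 0 := by
    rw [integral_finsetSum _ fun i _ => cont_integrable _ (by fun_prop)]
    refine Finset.sum_eq_zero fun i _ => ?_
    rw [integral_const_mul, hM0, mul_zero]
  have hAA : ∫ _ : sphere (0 : E3) 1, ∑ i, A i ^ 2 ∂sphMeas = w0 ^ 2 := by
    rw [s0]
    exact sphInt_const (∑ i, A i ^ 2) 0
  have hb : ∫ ω, ((∑ k, ∑ i, (M k i ω + A i * (ω : E3) k) ^ 2) +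
        (α / (α + 2)) * (∑ k, (∑ j, (M k j ω + A j * (ω : E3) k) * (ω : E3) j) ^ 2) +
      α * (∑ k, (M k k ω + A k * (ω : E3) k)) ^ 2 +
      α * (α / (α + 2)) * ((∑ k, (M k k ω + A k * (ω : E3) k)) *
        ∑ k, (ω : E3) k * (∑ j, (M k j ω + A j * (ω : E3) k) * (ω : E3) j))) ∂sphMeas =
      w1 ^ 2 + w0 ^ 2 + (α / (α + 2)) * N ^ 2 +
      (α + (α / (α + 2)) + α * (α / (α + 2))) * (w0 ^ 2 / 3) +
      α * (∫ ω, ν ω * s ω ∂sphMeas) + α * w2 ^ 2 +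
      (2 * α + α * (α / (α + 2))) * (∫ ω, d ω * s ω ∂sphMeas) +
      α * (α / (α + 2)) * ∫ ω, d ω * ν ω ∂sphMeas := by
    have e : ∀ ω : sphere (0 : E3) 1, _ := fun ω =>
      b1_decomp α (α / (α + 2)) hβ (fun i => (ω : E3) i) A (sphere_sum_sq ω) (fun k i => M k i ω)
    simp only [e]
    rw [integral_add (cont_integrable _ (by fun_prop)) (cont_integrable _ (by fun_prop)),
      integral_add (cont_integrable _ (by fun_prop)) (cont_integrable _ (by fun_prop)),
      integral_add (cont_integrable _ (by fun_prop)) (cont_integrable _ (by fun_prop)),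
      integral_add (cont_integrable _ (by fun_prop)) (cont_integrable _ (by fun_prop)),
      integral_add (cont_integrable _ (by fun_prop)) (cont_integrable _ (by fun_prop)),
      integral_add (cont_integrable _ (by fun_prop)) (cont_integrable _ (by fun_prop)),
      integral_add (cont_integrable _ (by fun_prop)) (cont_integrable _ (by fun_prop)),
      integral_add (cont_integrable _ (by fun_prop)) (cont_integrable _ (by fun_prop))]
    simp only [integral_const_mul]
    rw [hA, hAA, ← s1, ← s2, ← bs, sN]
    ring
  rw [hb]
  exact scalar_ineq hα rfl hr h1 N0 h21 h2 (by rw [sV, s1]; exact hP) X1 X2 X3 hT rfl rfl rfl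

/-! ### The inequality on the sphere of radius `r` for `u` -/

section
variable {u : E3 → Fin 3 → ℝ} {R : ℝ}

/-- The derivative `∂ₖvᵢ` of the fluctuation, away from the origin. -/
def mv (u : E3 → Fin 3 → ℝ) (k i : Fin 3) (x : E3) : ℝ :=
  pd k (fun y => u y i) x - af u x i * om k x

lemma TF.pd_vf (h : TF u R) {x : E3} (hx : x ≠ 0) (k i : Fin 3) :
    pd k (fun y => vf u y i) x = mv u k i x := pd_sub_sm (h.c1 i) hx k

lemma TF.sgM (h : TF u R) (k i : Fin 3) : Sg 0 (mv u k i) :=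
  (h.sgD k i).sub ((h.sgA i).mul0 (sg_om k))

lemma af_smul {r : ℝ} (hr : 0 < r) (i : Fin 3) (ω : sphere (0 : E3) 1) :
    af u (r • (ω : E3)) i = deriv (sm (fun y => u y i)) r := by
  rw [af, norm_smul_sphere hr]

lemma mv_smul {r : ℝ} (hr : 0 < r) (k i : Fin 3) (ω : sphere (0 : E3) 1) :
    mv u k i (r • (ω : E3)) + deriv (sm (fun y => u y i)) r * (ω : E3) k =
      pd k (fun y => u y i) (r • (ω : E3)) := by
  rw [mv, af_smul hr, om_smul hr]; ring

lemma mv_mean (h : TF u R) {r : ℝ} (hr : 0 < r) (i : Fin 3) :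
    ∫ ω : sphere (0 : E3) 1, ∑ k, (ω : E3) k * mv u k i (r • (ω : E3)) ∂sphMeas = 0 := by
  have hf := h.c1 i
  have e : ∀ ω : sphere (0 : E3) 1, ∑ k, (ω : E3) k * mv u k i (r • (ω : E3)) =
      fderiv ℝ (fun y => u y i) (r • (ω : E3)) ω - deriv (sm (fun y => u y i)) r := by
    intro ω
    rw [fderiv_eq_sum_pd]
    simp only [← mv_smul hr, mul_add, Finset.sum_add_distrib]
    have h1 := sphere_sum_sq ω
    have h2 : ∑ k, (ω : E3) k * (deriv (sm (fun y => u y i)) r * (ω : E3) k) =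
        deriv (sm (fun y => u y i)) r * ∑ k, (ω : E3) k ^ 2 := by
      rw [Finset.mul_sum]; exact Finset.sum_congr rfl fun k _ => by ring
    rw [h2, h1]; ring
  have hi : Integrable (fun ω : sphere (0 : E3) 1 =>
      fderiv ℝ (fun y => u y i) (r • (ω : E3)) ω) sphMeas :=
    cont_integrable _ (((hf.continuous_fderiv one_ne_zero).comp (by fun_prop)).clm_apply
      (by fun_prop))
  simp only [e]
  rw [integral_sub hi (integrable_const _)]
  have h1 := sphInt_const (deriv (sm (fun y => u y i)) r) 0
  simp only [sphInt] at h1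
  rw [h1, sm_deriv hf]
  field_simp
  ring

/-- Subtracting a multiple of the unit vector `ω` does not change the part orthogonal to `ω`. -/
lemma tangential_le (ω D : Fin 3 → ℝ) (a : ℝ) (hω : ∑ k, ω k ^ 2 = 1) :
    (∑ k, D k ^ 2) - (∑ k, ω k * D k) ^ 2 ≤ ∑ k, (D k - a * ω k) ^ 2 := by
  have : ∑ k, (D k - a * ω k) ^ 2 - ((∑ k, D k ^ 2) - (∑ k, ω k * D k) ^ 2) =
      (∑ k, ω k * D k - a) ^ 2 := by
    simp only [Fin.sum_univ_three] at hω ⊢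
    linear_combination a ^ 2 * hω
  nlinarith [sq_nonneg (∑ k, ω k * D k - a)]

lemma norm_sq_gradient (g : E3 → ℝ) (x : E3) : ‖gradient g x‖ ^ 2 = ∑ k, pd k g x ^ 2 := by
  rw [EuclideanSpace.real_norm_sq_eq]
  refine Finset.sum_congr rfl fun k _ => ?_
  have := inner_gradient g x (EuclideanSpace.single k 1)
  rw [pd, ← this, EuclideanSpace.inner_single_right]
  simp

/-- The Poincaré inequality for one component of the fluctuation on the sphere of radius `r`. -/
lemma vf_poincare (h : TF u R) {r : ℝ} (hr : 0 < r) (i : Fin 3) :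
    ∫ ω : sphere (0 : E3) 1, vf u (r • (ω : E3)) i ^ 2 ∂sphMeas ≤
      (5 / 7) * (r ^ 2 * ∫ ω : sphere (0 : E3) 1, ∑ k, mv u k i (r • (ω : E3)) ^ 2 ∂sphMeas) := by
  have hf := h.c1 i
  set f : E3 → ℝ := fun y => u y i with hfd
  let g : E3 → ℝ := fun y => f (r • y) - sm f r
  have hg : ContDiff ℝ 1 g := (hf.comp (contDiff_const_smul r)).sub contDiff_const
  have hc : Continuous (fun ω : sphere (0 : E3) 1 => f (r • (ω : E3))) :=
    hf.continuous.comp (by fun_prop)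
  have h0 : sphInt g 1 = 0 := by
    simp only [sphInt, g, one_smul]
    rw [integral_sub (cont_integrable _ hc) (integrable_const _)]
    have h1 := sphInt_const (sm f r) 0
    simp only [sphInt] at h1
    rw [h1, sm, sphInt]
    field_simp
    ring
  have hp := sphere_poincare hg h0
  have hpd : ∀ (y : E3) k, pd k g y = r * pd k f (r • y) := by
    intro y k
    have h1 : HasFDerivAt (fun y : E3 => r • y) (r • ContinuousLinearMap.id ℝ E3) y :=
      (hasFDerivAt_id y).const_smul r
    have h2 : HasFDerivAt g _ y :=
      (HasFDerivAt.comp y (hf.differentiable one_ne_zero (r • y)).hasFDerivAt h1).sub_const (sm f r)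
    simp [pd, h2.fderiv]
  have hg2 := gradient_continuous hg
  simp only [sphInt, one_smul] at hp
  have e1 : ∀ ω : sphere (0 : E3) 1, vf u (r • (ω : E3)) i = g ω := fun ω => by
    simp only [vf, g, norm_smul_sphere hr, hfd]
  simp only [e1]
  refine hp.trans (mul_le_mul_of_nonneg_left ?_ (by norm_num))
  rw [← integral_const_mul]
  have cM : Continuous (fun ω : sphere (0 : E3) 1 => ∑ k, mv u k i (r • (ω : E3)) ^ 2) :=
    continuous_finsetSum _ fun k _ => ((h.sgM k i).sphere_cont hr).pow 2
  refine integral_mono (cont_integrable _ ?_) (cont_integrable _ (continuous_const.mul cM))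
    fun ω => ?_
  · have : Continuous (fun ω : sphere (0 : E3) 1 => gradient g (ω : E3)) :=
      hg2.comp continuous_subtype_val
    exact (this.norm.pow 2).sub ((this.inner continuous_subtype_val).pow 2)
  · have h1 := tangential_le (fun k => (ω : E3) k) (fun k => pd k f (r • (ω : E3)))
      (deriv (sm f) r) (sphere_sum_sq ω)
    have h2 : ∀ k, mv u k i (r • (ω : E3)) =
        pd k f (r • (ω : E3)) - deriv (sm f) r * (ω : E3) k := fun k => by
      rw [mv, af_smul hr, om_smul hr]
    simp only [norm_sq_gradient, inner_gradient, fderiv_eq_sum_pd, hpd, h2]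
    have h3 : ∑ k, (ω : E3) k * (r * pd k f (r • (ω : E3))) =
        r * ∑ k, (ω : E3) k * pd k f (r • (ω : E3)) := by
      rw [Finset.mul_sum]; exact Finset.sum_congr rfl fun k _ => by ring
    rw [h3]
    simp only [mul_pow, ← Finset.mul_sum, ← mul_sub]
    exact mul_le_mul_of_nonneg_left h1 (sq_nonneg r)

lemma vf_poincare_sum (h : TF u R) {r : ℝ} (hr : 0 < r) :
    ∫ ω : sphere (0 : E3) 1, ∑ i, vf u (r • (ω : E3)) i ^ 2 ∂sphMeas ≤
      (5 / 7) * (r ^ 2 *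
        ∫ ω : sphere (0 : E3) 1, ∑ k, ∑ i, mv u k i (r • (ω : E3)) ^ 2 ∂sphMeas) := by
  have c1 : ∀ i, Continuous (fun ω : sphere (0 : E3) 1 => vf u (r • (ω : E3)) i) :=
    fun i => (h.sgV i).sphere_cont hr
  have c2 : ∀ k i, Continuous (fun ω : sphere (0 : E3) 1 => mv u k i (r • (ω : E3))) :=
    fun k i => (h.sgM k i).sphere_cont hr
  rw [integral_finsetSum _ fun i _ => cont_integrable (fun ω => vf u (r • (ω : E3)) i ^ 2) ((c1 i).pow 2)]
  have e : ∀ ω : sphere (0 : E3) 1, ∑ k, ∑ i, mv u k i (r • (ω : E3)) ^ 2 =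
      ∑ i, ∑ k, mv u k i (r • (ω : E3)) ^ 2 := fun ω => Finset.sum_comm
  simp only [e]
  rw [integral_finsetSum _ fun i _ => cont_integrable (fun ω => ∑ k, mv u k i (r • (ω : E3)) ^ 2)
    (continuous_finsetSum _ fun k _ => (c2 k i).pow 2), Finset.mul_sum, Finset.mul_sum]
  exact Finset.sum_le_sum fun i _ => vf_poincare h hr i

/-- The vector `w(r)` of the three spherical norms. -/
def wv (u : E3 → Fin 3 → ℝ) (r : ℝ) : Fin 3 → ℝ :=
  ![√(4 * π * ∑ i, deriv (sm (fun y => u y i)) r ^ 2),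
    √(sphInt (fun x => ∑ k, ∑ i, mv u k i x ^ 2) r),
    √(sphInt (fun x => (∑ k, mv u k k x) ^ 2) r)]

/-- The inequality between the radial densities. -/
lemma radial_ineq {α : ℝ} (hα : 0 ≤ α) (h : TF u R) {r : ℝ} (hr : 0 < r) :
    r * ∑ i, ∑ j, wv u r i * Bplus α i j * wv u r j ≤
      r * sphInt (b1 α u) r - (α / (α + 2)) * sphInt (cross2 (vf u) u) r := by
  have key := sphere_ineq hα hr (fun i => deriv (sm (fun y => u y i)) r)
    (fun k i ω => mv u k i (r • (ω : E3))) (fun i ω => vf u (r • (ω : E3)) i)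
    (fun k i => (h.sgM k i).sphere_cont hr) (fun i => (h.sgV i).sphere_cont hr)
    (mv_mean h hr) (vf_poincare_sum h hr) (wv u r 0) (wv u r 1) (wv u r 2) rfl rfl rfl
  have e2 : sphInt (cross2 (vf u) u) r = ∫ ω : sphere (0 : E3) 1,
      ((∑ i, vf u (r • (ω : E3)) i * (ω : E3) i) * (∑ k, mv u k k (r • (ω : E3)))
        - ∑ k, vf u (r • (ω : E3)) k * ∑ j, mv u k j (r • (ω : E3)) * (ω : E3) j) ∂sphMeas := by
    unfold sphInt
    congr 1
    ext ω
    unfold cross2 dw divg uw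
    simp only [om_smul hr, ← mv_smul hr, Fin.sum_univ_three]
    ring
  rw [e2]
  simp only [mv_smul hr] at key
  unfold sphInt b1 dw divg
  simp only [om_smul hr]
  refine le_trans (le_of_eq ?_) key
  simp only [Fin.sum_univ_three, Bplus, Matrix.of_apply, Matrix.cons_val', Matrix.cons_val]
  ring

end

/-! ### Integration in the radius -/

section
variable {u : E3 → Fin 3 → ℝ} {R : ℝ}

lemma af_off (h : TF u R) (i : Fin 3) : ∀ x, R < ‖x‖ → af u x i = 0 := by
  intro x hx
  have hp : 0 < ‖x‖ := h.pos.trans hx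
  rw [af, sm_deriv (h.c1 i)]
  have : ∀ ω : sphere (0 : E3) 1, fderiv ℝ (fun y => u y i) (‖x‖ • (ω : E3)) ω = 0 := fun ω => by
    rw [fderiv_eq_sum_pd]
    exact Finset.sum_eq_zero fun k _ => by
      rw [h.doff k i _ (by rwa [norm_smul_sphere hp]), mul_zero]
  simp [this]

lemma mv_off (h : TF u R) (k i : Fin 3) : ∀ x, R < ‖x‖ → mv u k i x = 0 := by
  intro x hx
  simp [mv, h.doff k i x hx, af_off h i x hx]

lemma integrableOn_sphInt {g : E3 → ℝ} (hg : Sg 0 g) (h0 : ∀ x, R < ‖x‖ → g x = 0) :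
    IntegrableOn (fun r => r * sphInt g r) (Set.Ioi 0) :=
  (polar _ (TF.integrable (Sg.inv_norm.mul0 hg) (by norm_num)
    fun x hx => by rw [h0 x hx, mul_zero])).1.congr_fun
      (fun _ hr => sphInt_inv_norm _ hr) measurableSet_Ioi

/-- The densities whose integrals over spheres are the squares of the components of `w(r)`. -/
def wsq (u : E3 → Fin 3 → ℝ) : Fin 3 → E3 → ℝ :=
  ![fun x => ∑ i, af u x i ^ 2, fun x => ∑ k, ∑ i, mv u k i x ^ 2, fun x => (∑ k, mv u k k x) ^ 2]

lemma wv_eq_sqrt (u : E3 → Fin 3 → ℝ) {r : ℝ} (hr : 0 < r) (i : Fin 3) :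
    wv u r i = √(sphInt (wsq u i) r) := by
  fin_cases i
  · simp only [wv, wsq, Fin.zero_eta, Matrix.cons_val_zero]
    congr 1
    unfold sphInt
    simp only [af_smul hr]
    exact (sphInt_const _ 0).symm
  · rfl
  · rfl

lemma integrableOn_wv_mul (h : TF u R) (i j : Fin 3) :
    IntegrableOn (fun r => r * (wv u r i * wv u r j)) (Set.Ioi 0) := by
  have hG : ∀ i, IntegrableOn (fun r => r * sphInt (wsq u i) r) (Set.Ioi 0) := by
    intro i
    fin_cases i
    · change IntegrableOn (fun r => r * sphInt (fun x => ∑ i, af u x i ^ 2) r) _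
      refine integrableOn_sphInt (R := R) (Sg.sum _ fun i _ => (h.sgA i).pow0 2) fun x hx => ?_
      simp [af_off h _ x hx]
    · change IntegrableOn (fun r => r * sphInt (fun x => ∑ k, ∑ i, mv u k i x ^ 2) r) _
      refine integrableOn_sphInt (R := R)
        (Sg.sum _ fun k _ => Sg.sum _ fun i _ => (h.sgM k i).pow0 2) fun x hx => ?_
      simp [mv_off h _ _ x hx]
    · change IntegrableOn (fun r => r * sphInt (fun x => (∑ k, mv u k k x) ^ 2) r) _
      refine integrableOn_sphInt (R := R) ((Sg.sum _ fun k _ => h.sgM k k).pow0 2) fun x hx => ?_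
      simp [mv_off h _ _ x hx]
  have hpos : ∀ i r, 0 ≤ sphInt (wsq u i) r := by
    intro i r
    refine integral_nonneg fun ω => ?_
    fin_cases i
    · change 0 ≤ ∑ i, af u (r • (ω : E3)) i ^ 2
      exact Finset.sum_nonneg fun i _ => sq_nonneg _
    · change 0 ≤ ∑ k, ∑ i, mv u k i (r • (ω : E3)) ^ 2
      exact Finset.sum_nonneg fun k _ => Finset.sum_nonneg fun i _ => sq_nonneg _
    · exact sq_nonneg _
  have hm : ∀ i, AEStronglyMeasurable (fun r => √(r * sphInt (wsq u i) r))
      (volume.restrict (Set.Ioi 0)) := fun i =>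
    continuous_sqrt.comp_aestronglyMeasurable (hG i).aestronglyMeasurable
  have h1 : IntegrableOn (fun r => √(r * sphInt (wsq u i) r) * √(r * sphInt (wsq u j) r)) (Set.Ioi 0) := by
    refine Integrable.mono' ((hG i).add (hG j)) ((hm i).mul (hm j)) ?_
    filter_upwards [ae_restrict_mem measurableSet_Ioi] with r hr
    have a := sq_sqrt (mul_nonneg (le_of_lt hr) (hpos i r))
    have b := sq_sqrt (mul_nonneg (le_of_lt hr) (hpos j r))
    rw [norm_of_nonneg (by positivity)]
    simp only [Pi.add_apply]
    nlinarith [sq_nonneg (√(r * sphInt (wsq u i) r) - √(r * sphInt (wsq u j) r))]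
  refine h1.congr_fun (fun r hr => ?_) measurableSet_Ioi
  have hr' : (0 : ℝ) < r := hr
  simp only
  rw [wv_eq_sqrt u hr' i, wv_eq_sqrt u hr' j, sqrt_mul hr'.le, sqrt_mul hr'.le]
  have := mul_self_sqrt hr'.le
  linear_combination √(sphInt (wsq u i) r) * √(sphInt (wsq u j) r) * this

lemma integrableOn_form (α : ℝ) (h : TF u R) :
    IntegrableOn (fun r => r * ∑ i, ∑ j, wv u r i * Bplus α i j * wv u r j) (Set.Ioi 0) := by
  have : IntegrableOn (fun r => ∑ i, ∑ j, Bplus α i j * (r * (wv u r i * wv u r j))) (Set.Ioi 0) :=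
    integrable_finsetSum _ fun i _ => integrable_finsetSum _ fun j _ =>
      (integrableOn_wv_mul h i j).const_mul _
  refine this.congr_fun (fun r _ => ?_) measurableSet_Ioi
  simp only [Finset.mul_sum]
  exact Finset.sum_congr rfl fun i _ => Finset.sum_congr rfl fun j _ => by ring

lemma form_integral_le {α : ℝ} (hα : 0 ≤ α) (h : TF u R) :
    ∫ r in Set.Ioi (0 : ℝ), r * ∑ i, ∑ j, wv u r i * Bplus α i j * wv u r j ≤
      (∫ x, ‖x‖⁻¹ * b1 α u x) - (α / (α + 2)) * ∫ x, ‖x‖⁻¹ ^ 2 * crossT u x := by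
  obtain ⟨p1, p2⟩ := polar _ (int_b1 α h)
  obtain ⟨q1, q2⟩ := polar _ (integral_crossT h).1
  have e1 : Set.EqOn (fun r => r ^ 2 * sphInt (fun x => ‖x‖⁻¹ * b1 α u x) r)
    (fun r => r * sphInt (b1 α u) r) (Set.Ioi 0) := fun r hr => sphInt_inv_norm _ hr
  have e2 : Set.EqOn (fun r => r ^ 2 * sphInt (fun x => ‖x‖⁻¹ ^ 2 * cross2 (vf u) u x) r)
    (fun r => sphInt (cross2 (vf u) u) r) (Set.Ioi 0) := fun r hr => sphInt_inv_norm_sq _ hr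
  have p1' := p1.congr_fun e1 measurableSet_Ioi
  have q1' := (q1.congr_fun e2 measurableSet_Ioi).const_mul (α / (α + 2))
  rw [(integral_crossT h).2, p2, q2, setIntegral_congr_fun measurableSet_Ioi e1,
    setIntegral_congr_fun measurableSet_Ioi e2, ← integral_const_mul, ← integral_sub p1' q1']
  exact setIntegral_mono_on (integrableOn_form α h) (p1'.sub q1') measurableSet_Ioi
    fun r hr => radial_ineq hα h hr

end

/-- For `α ≥ 0`, the lower bound
`∫ (Lu)·(Φu) dx ≥ (1/2)|u(0)|² + c_α ∫₀^∞ r (wᵀ B₊ w) dr`, where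
`w = (‖D_r ū‖_ω, ‖Dv‖_ω, ‖div v‖_ω)`. -/
theorem lame_energy_lower_bound_Bplus
    (α : ℝ) (hα : 0 ≤ α)
    (u : E3 → Fin 3 → ℝ) (hu : IsTestOn Set.univ u)
    (ub : Fin 3 → ℝ → ℝ) (v : E3 → Fin 3 → ℝ)
    (hdec : IsSphericalMeanDecomp u ub v)
    (w : ℝ → Fin 3 → ℝ)
    (hw0 : ∀ r, w r 0 = Real.sqrt (4 * Real.pi * ∑ i, (deriv (ub i) r) ^ 2))
    (hw1 : ∀ r, w r 1 =
      Real.sqrt (sphInt (fun x => ∑ i, ∑ k, (pd k (fun z => v z i) x) ^ 2) r))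
    (hw2 : ∀ r, w r 2 = Real.sqrt (sphInt (fun x => (divg v x) ^ 2) r)) :
    (1 / 2) * (∑ i, (u 0 i) ^ 2) +
        cA α * ∫ r in Set.Ioi (0 : ℝ), r * ∑ i, ∑ j, w r i * Bplus α i j * w r j ≤
      ∫ x : E3, ∑ i, ∑ j, lame α u x i * Phi α x i j * u x j := by
  obtain ⟨R, h⟩ := hu.exists_TF
  have hub : ∀ i, ub i = sm (fun y => u y i) := fun i => funext fun r => hdec.1 i r
  have hv : v = vf u := by
    funext x i
    have := hdec.2 x i
    rw [hub] at this
    rw [vf]; linarith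
  have hw : ∀ r, 0 < r → w r = wv u r := by
    intro r hr
    funext i
    fin_cases i
    · simp [hw0, hub, wv]
    · simp only [Fin.mk_one, hw1, wv, hv, Matrix.cons_val]
      unfold sphInt
      simp only [h.pd_vf (smul_sphere_ne hr _)]
      congr 2
      ext ω
      exact Finset.sum_comm
    · simp only [Fin.reduceFinMk, hw2, wv, hv, Matrix.cons_val]
      unfold sphInt divg
      simp only [h.pd_vf (smul_sphere_ne hr _)]
  have e : ∫ r in Set.Ioi (0 : ℝ), r * ∑ i, ∑ j, w r i * Bplus α i j * w r j =
      ∫ r in Set.Ioi (0 : ℝ), r * ∑ i, ∑ j, wv u r i * Bplus α i j * wv u r j :=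
    setIntegral_congr_fun measurableSet_Ioi fun r hr => by simp only [hw r hr]
  rw [e, energy_eq hα h, integral_radT α h]
  have hc : 0 ≤ cA α := by unfold cA; positivity
  have hcv : cA α * (2 * π * (1 + α / (α + 2))) = 1 / 2 := by
    unfold cA
    field_simp
    ring
  have := mul_le_mul_of_nonneg_left (form_integral_le hα h) hc
  linear_combination this - (∑ i, u 0 i ^ 2) * hcv
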